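/- Every binary code of length 16 with exactly 256 codewords and minimum distance 6 is completely transitive. (In particular, the Nordstrom-Robinson code is completely transitive.) -/

import Mathlib

open Set


/-- Distance from a vertex to a code in the binary Hamming space. -/
noncomputable def distToCode {m : ℕ} (C : Set (Fin m → ZMod 2)) (x : Fin m → ZMod 2) : ℕ :=
  sInf {d | ∃ c ∈ C, hammingDist x c = d}

/-- `C` has minimum distance `δ`. -/
def IsMinDist {m : ℕ} (C : Set (Fin m → ZMod 2)) (δ : ℕ) : Prop :=
  (∀ x ∈ C, ∀ y ∈ C, x ≠ y → δ ≤ hammingDist x y) ∧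
  ∃ x ∈ C, ∃ y ∈ C, x ≠ y ∧ hammingDist x y = δ

/-- `C` is completely regular: the number of codewords at distance `k` from `γ`
depends only on `distToCode C γ` and `k`. -/
def IsCompletelyRegular {m : ℕ} (C : Set (Fin m → ZMod 2)) : Prop :=
  ∀ γ γ' : Fin m → ZMod 2, distToCode C γ = distToCode C γ' →
    ∀ k : ℕ, {c ∈ C | hammingDist γ c = k}.ncard = {c ∈ C | hammingDist γ' c = k}.ncard

/-- A permutation of `F_2^m` is an automorphism of the Hamming graph iff it has
the form `x ↦ (x ∘ σ⁻¹) + v` for a coordinate permutation `σ` and `v ∈ F_2^m`. -/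
def IsHammingAut {m : ℕ} (f : Equiv.Perm (Fin m → ZMod 2)) : Prop :=
  ∃ (σ : Equiv.Perm (Fin m)) (v : Fin m → ZMod 2),
    ∀ x : Fin m → ZMod 2, f x = (fun i => x (σ.symm i)) + v

/-- `C` is completely transitive: some group `X` of Hamming-graph automorphisms
preserving `C` has each cell of the distance partition as a single orbit. -/
def IsCompletelyTransitive {m : ℕ} (C : Set (Fin m → ZMod 2)) : Prop :=
  ∃ X : Subgroup (Equiv.Perm (Fin m → ZMod 2)),
    (∀ g ∈ X, IsHammingAut g ∧ ⇑g '' C = C) ∧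
    ∀ i : ℕ, ∀ x : Fin m → ZMod 2, distToCode C x = i →
      {y | distToCode C y = i} = {y | ∃ g ∈ X, g x = y}


namespace NR

/-- sign vector of a subset -/
def eps (A : Finset (Fin 16)) (i : Fin 16) : ℤ := if i ∈ A then -1 else 1

/-- character -/
def chi (U A : Finset (Fin 16)) : ℤ := ∏ i ∈ U, eps A i

/-- inner product of sign vectors -/
def tt (A B : Finset (Fin 16)) : ℤ := ∑ i, eps A i * eps B i

/-- elementary symmetric function of the product of two sign vectors -/
def EE (j : ℕ) (A B : Finset (Fin 16)) : ℤ :=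
  ∑ U ∈ Finset.powersetCard j Finset.univ, ∏ i ∈ U, (eps A i * eps B i)

lemma eps_sq (A : Finset (Fin 16)) (i : Fin 16) : eps A i * eps A i = 1 := by
  unfold eps; split_ifs <;> norm_num

lemma eps_mul (A B : Finset (Fin 16)) (i : Fin 16) :
    eps A i * eps B i = if i ∈ symmDiff A B then -1 else 1 := by
  unfold eps
  by_cases h1 : i ∈ A <;> by_cases h2 : i ∈ B <;> simp [Finset.mem_symmDiff, h1, h2]

lemma tt_eq (A B : Finset (Fin 16)) : tt A B = 16 - 2 * ((symmDiff A B).card : ℤ) := by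
  unfold tt
  simp_rw [eps_mul]
  rw [Finset.sum_ite]
  have h1 : (Finset.univ.filter (fun i => i ∈ symmDiff A B)) = symmDiff A B := by ext; simp
  have h2 : (Finset.univ.filter (fun i => i ∉ symmDiff A B)) = (symmDiff A B)ᶜ := by ext; rw [Finset.mem_filter, Finset.mem_compl]; simp only [Finset.mem_univ, true_and]
  rw [h1, h2]
  have h3 := Finset.card_add_card_compl (symmDiff A B)
  simp only [Fintype.card_fin] at h3
  simp only [Finset.sum_const, nsmul_eq_mul]
  linarith [(by exact_mod_cast h3 : ((symmDiff A B).card : ℤ) + ((symmDiff A B)ᶜ.card : ℤ) = 16)]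

lemma EE_newton (A B : Finset (Fin 16)) :
    EE 1 A B = tt A B ∧ 2 * EE 2 A B = tt A B ^ 2 - 16 ∧
    3 * EE 3 A B = EE 2 A B * tt A B - 16 * tt A B + tt A B ∧
    4 * EE 4 A B = EE 3 A B * tt A B - 16 * EE 2 A B + tt A B * tt A B - 16 := by
  have key : ∀ k, (MvPolynomial.aeval (fun i => eps A i * eps B i))
      (MvPolynomial.esymm (Fin 16) ℤ k) = EE k A B := by
    intro k
    simp [MvPolynomial.esymm, EE, map_sum, map_prod]
  have key2 : ∀ k, (MvPolynomial.aeval (fun i => eps A i * eps B i))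
      (MvPolynomial.psum (Fin 16) ℤ k) = if Even k then 16 else tt A B := by
    intro k
    simp only [MvPolynomial.psum, map_sum, map_pow, MvPolynomial.aeval_X]
    have hs : ∀ i, (eps A i * eps B i) ^ 2 = 1 := by
      intro i
      rw [pow_two]
      calc _ = (eps A i * eps A i) * (eps B i * eps B i) := by ring
        _ = 1 := by simp [eps_sq]
    split_ifs with h
    · obtain ⟨r, rfl⟩ := h
      have : ∀ i, (eps A i * eps B i) ^ (r + r) = 1 := by
        intro i; rw [← two_mul, pow_mul, hs, one_pow]
      simp [this]
    · obtain ⟨r, rfl⟩ := Nat.not_even_iff_odd.mp h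
      unfold tt
      refine Finset.sum_congr rfl fun i _ => ?_
      rw [pow_add, pow_mul, hs, one_pow]; ring
  have N := fun k => congrArg (MvPolynomial.aeval (fun i => eps A i * eps B i))
    (MvPolynomial.mul_esymm_eq_sum (σ := Fin 16) (R := ℤ) k)
  generalize MvPolynomial.aeval (R := ℤ) (fun i => eps A i * eps B i) = φ at key key2 N
  have h0 : EE 0 A B = 1 := by simp [EE]
  have N1 := N 1
  have N2 := N 2
  have N3 := N 3
  have N4 := N 4
  have a1 : (Finset.HasAntidiagonal.antidiagonal 1).filter (fun a : ℕ × ℕ => a.1 < 1) = {(0,1)} := by decide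
  have a2 : (Finset.HasAntidiagonal.antidiagonal 2).filter (fun a : ℕ × ℕ => a.1 < 2) = {(0,2),(1,1)} := by decide
  have a3 : (Finset.HasAntidiagonal.antidiagonal 3).filter (fun a : ℕ × ℕ => a.1 < 3) = {(0,3),(1,2),(2,1)} := by decide
  have a4 : (Finset.HasAntidiagonal.antidiagonal 4).filter (fun a : ℕ × ℕ => a.1 < 4) = {(0,4),(1,3),(2,2),(3,1)} := by
    decide
  rw [a1] at N1
  rw [a2] at N2
  rw [a3] at N3
  rw [a4] at N4
  have e1 : ¬ Even 1 := by decide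
  have e2 : Even 2 := by decide
  have e3 : ¬ Even 3 := by decide
  have e4 : Even 4 := by decide
  have f2 : φ 2 = 2 := map_ofNat φ 2
  have f3 : φ 3 = 3 := map_ofNat φ 3
  have f4 : φ 4 = 4 := map_ofNat φ 4
  simp [key, key2, h0, f2, f3, f4, e1, e2, e3, e4, -MvPolynomial.esymm_one, -MvPolynomial.psum_one] at N1 N2 N3 N4
  refine ⟨N1, ?_, ?_, ?_⟩
  · rw [N2, N1]; ring
  · rw [N3, N1]; ring
  · rw [N4, N1]; ring

lemma EE_chi (j : ℕ) (A B : Finset (Fin 16)) :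
    EE j A B = ∑ U ∈ Finset.powersetCard j Finset.univ, chi U A * chi U B := by
  unfold EE chi
  simp_rw [Finset.prod_mul_distrib]

lemma chi_univ (A B : Finset (Fin 16)) :
    chi Finset.univ A * chi Finset.univ B = (-1) ^ (symmDiff A B).card := by
  unfold chi
  rw [← Finset.prod_mul_distrib]
  simp_rw [eps_mul]
  rw [Finset.prod_ite]
  simp

/-- A binary (16,256,6) code, as a family of subsets. -/
def IsC (C : Finset (Finset (Fin 16))) : Prop :=
  C.card = 256 ∧ ∀ A ∈ C, ∀ B ∈ C, A ≠ B → 6 ≤ (symmDiff A B).card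

/-- LP kernel -/
def gg (A B : Finset (Fin 16)) : ℤ :=
  480 + 480 * EE 1 A B + 144 * EE 2 A B + 89 * EE 3 A B + 17 * EE 4 A B
   + chi Finset.univ A * chi Finset.univ B * (7 * EE 3 A B + 7 * EE 4 A B)

lemma gg_self (A : Finset (Fin 16)) : gg A A = 122880 := by
  obtain ⟨h1, h2, h3, h4⟩ := EE_newton A A
  have ht := tt_eq A A
  have hc := chi_univ A A
  unfold gg
  rw [hc]
  simp only [symmDiff_self, Finset.bot_eq_empty, Finset.card_empty] at ht ⊢
  norm_num at ht
  rw [ht] at h1 h2 h3 h4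
  have h2' : EE 2 A A = 120 := by omega
  rw [h2'] at h3 h4
  have h3' : EE 3 A A = 560 := by omega
  rw [h3'] at h4
  have h4' : EE 4 A A = 1820 := by omega
  rw [h1, h2', h3', h4']
  norm_num

lemma gg_nonpos (A B : Finset (Fin 16)) (h : 6 ≤ (symmDiff A B).card) :
    gg A B ≤ 0 ∧ (gg A B = 0 → (symmDiff A B).card = 6 ∨ (symmDiff A B).card = 8 ∨
      (symmDiff A B).card = 10 ∨ (symmDiff A B).card = 16) := by
  obtain ⟨h1, h2, h3, h4⟩ := EE_newton A B
  have ht := tt_eq A B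
  have hc := chi_univ A B
  have hle : (symmDiff A B).card ≤ 16 := by
    simpa using Finset.card_le_univ (symmDiff A B)
  unfold gg
  rw [hc]
  generalize EE 1 A B = x1 at *
  generalize EE 2 A B = x2 at *
  generalize EE 3 A B = x3 at *
  generalize EE 4 A B = x4 at *
  generalize (symmDiff A B).card = d at *
  generalize tt A B = t at *
  subst h1
  interval_cases d <;> norm_num at ht <;> subst ht <;> norm_num <;>
    (have e2 := Int.eq_ediv_of_mul_eq_right (by norm_num) h2
     norm_num at e2
     subst e2
     have e3 := Int.eq_ediv_of_mul_eq_right (by norm_num) h3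
     norm_num at e3
     subst e3
     have e4 := Int.eq_ediv_of_mul_eq_right (by norm_num) h4
     norm_num at e4
     subst e4
     norm_num)

lemma sum_EE (C : Finset (Finset (Fin 16))) (w : Finset (Fin 16) → ℤ) (j : ℕ) :
    ∑ A ∈ C, ∑ B ∈ C, w A * w B * EE j A B
      = ∑ U ∈ Finset.powersetCard j Finset.univ, (∑ A ∈ C, w A * chi U A) ^ 2 := by
  simp_rw [EE_chi, Finset.mul_sum]
  have : ∀ A ∈ C, ∑ B ∈ C, ∑ U ∈ Finset.powersetCard j Finset.univ, w A * w B * (chi U A * chi U B)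
      = ∑ U ∈ Finset.powersetCard j Finset.univ, ∑ B ∈ C, w A * w B * (chi U A * chi U B) :=
    fun A _ => Finset.sum_comm
  rw [Finset.sum_congr rfl this, Finset.sum_comm]
  refine Finset.sum_congr rfl fun U _ => ?_
  rw [pow_two, Finset.sum_mul_sum]
  refine Finset.sum_congr rfl fun A _ => Finset.sum_congr rfl fun B _ => ?_
  ring

theorem lp {C : Finset (Finset (Fin 16))} (hC : IsC C) :
    (∀ A ∈ C, ∀ B ∈ C, A ≠ B → (symmDiff A B).card = 6 ∨ (symmDiff A B).card = 8 ∨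
      (symmDiff A B).card = 10 ∨ (symmDiff A B).card = 16) ∧
    (∀ U : Finset (Fin 16), U.card ∈ ({1,2,3,4} : Finset ℕ) → ∑ A ∈ C, chi U A = 0) := by
  obtain ⟨hcard, hd⟩ := hC
  have S : ∀ (w : Finset (Fin 16) → ℤ) (j : ℕ), 0 ≤ ∑ A ∈ C, ∑ B ∈ C, w A * w B * EE j A B := by
    intro w j
    rw [sum_EE]
    exact Finset.sum_nonneg fun _ _ => sq_nonneg _
  have tot : ∑ A ∈ C, ∑ B ∈ C, gg A B = 480 * 256 ^ 2
      + 480 * ∑ A ∈ C, ∑ B ∈ C, 1 * 1 * EE 1 A B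
      + 144 * ∑ A ∈ C, ∑ B ∈ C, 1 * 1 * EE 2 A B
      + 89 * ∑ A ∈ C, ∑ B ∈ C, 1 * 1 * EE 3 A B
      + 17 * ∑ A ∈ C, ∑ B ∈ C, 1 * 1 * EE 4 A B
      + 7 * ∑ A ∈ C, ∑ B ∈ C, chi Finset.univ A * chi Finset.univ B * EE 3 A B
      + 7 * ∑ A ∈ C, ∑ B ∈ C, chi Finset.univ A * chi Finset.univ B * EE 4 A B := by
    have : (480 : ℤ) * 256 ^ 2 = ∑ A ∈ C, ∑ B ∈ C, 480 := by
      simp [hcard]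
    rw [this]
    simp only [Finset.mul_sum, ← Finset.sum_add_distrib]
    refine Finset.sum_congr rfl fun A _ => Finset.sum_congr rfl fun B _ => ?_
    unfold gg
    ring
  have h1 := S (fun _ => 1) 1
  have h2 := S (fun _ => 1) 2
  have h3 := S (fun _ => 1) 3
  have h4 := S (fun _ => 1) 4
  have h5 := S (fun A => chi Finset.univ A) 3
  have h6 := S (fun A => chi Finset.univ A) 4
  have gle : ∀ A ∈ C, ∀ B ∈ C, gg A B ≤ if A = B then 122880 else 0 := by
    intro A hA B hB
    split_ifs with h
    · subst h; exact (gg_self A).le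
    · exact (gg_nonpos A B (hd A hA B hB h)).1
  have dsum : ∑ A ∈ C, ∑ B ∈ C, (if A = B then (122880 : ℤ) else 0) = 480 * 256 ^ 2 := by
    have : ∀ A ∈ C, ∑ B ∈ C, (if A = B then (122880 : ℤ) else 0) = 122880 := by
      intro A hA
      simp [hA]
    rw [Finset.sum_congr rfl this]
    simp [hcard]
  have up : ∑ A ∈ C, ∑ B ∈ C, gg A B ≤ 480 * 256 ^ 2 := by
    rw [← dsum]
    exact Finset.sum_le_sum fun A hA => Finset.sum_le_sum fun B hB => gle A hA B hB
  constructor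
  · intro A hA B hB hne
    apply (gg_nonpos A B (hd A hA B hB hne)).2
    have eq : ∑ A ∈ C, ∑ B ∈ C, gg A B = ∑ A ∈ C, ∑ B ∈ C, (if A = B then (122880 : ℤ) else 0) := by
      rw [dsum]; linarith
    have e1 := (Finset.sum_eq_sum_iff_of_le
      (fun A hA => Finset.sum_le_sum fun B hB => gle A hA B hB)).1 eq A hA
    have e2 := (Finset.sum_eq_sum_iff_of_le (fun B hB => gle A hA B hB)).1 e1 B hB
    rw [e2, if_neg hne]
  · intro U hU
    have z : ∀ j, ∑ A ∈ C, ∑ B ∈ C, 1 * 1 * EE j A B = 0 → U.card = j → ∑ A ∈ C, chi U A = 0 := by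
      intro j hj hUj
      have := sum_EE C (fun _ => 1) j
      beta_reduce at this
      rw [hj] at this
      have := (Finset.sum_eq_zero_iff_of_nonneg (fun _ _ => sq_nonneg _)).1 this.symm U
        (by simp [Finset.mem_powersetCard, hUj])
      simpa using this
    simp only [Finset.mem_insert, Finset.mem_singleton] at hU
    rcases hU with h | h | h | h
    · exact z 1 (by linarith) h
    · exact z 2 (by linarith) h
    · exact z 3 (by linarith) h
    · exact z 4 (by linarith) h

/-- moments -/
theorem moments {C : Finset (Finset (Fin 16))} (hC : IsC C) (X : Finset (Fin 16)) :
    ∑ A ∈ C, tt X A = 0 ∧ ∑ A ∈ C, tt X A ^ 2 = 4096 ∧ ∑ A ∈ C, tt X A ^ 3 = 0 ∧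
    ∑ A ∈ C, tt X A ^ 4 = 256 * 736 := by
  have z : ∀ j, j ∈ ({1,2,3,4} : Finset ℕ) → ∑ A ∈ C, EE j X A = 0 := by
    intro j hj
    simp_rw [EE_chi]
    rw [Finset.sum_comm]
    refine Finset.sum_eq_zero fun U hU => ?_
    rw [← Finset.mul_sum, (lp hC).2 U (by rw [(Finset.mem_powersetCard.1 hU).2]; exact hj), mul_zero]
  have z1 := z 1 (by decide)
  have z2 := z 2 (by decide)
  have z3 := z 3 (by decide)
  have z4 := z 4 (by decide)
  have c1 : ∑ A ∈ C, (1 : ℤ) = 256 := by simp [hC.1]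
  have t1 : ∀ A, tt X A = EE 1 X A := fun A => (EE_newton X A).1.symm
  have t2 : ∀ A, tt X A ^ 2 = 2 * EE 2 X A + 16 * 1 := fun A => by
    linarith [(EE_newton X A).2.1]
  have t3 : ∀ A, tt X A ^ 3 = 6 * EE 3 X A + 46 * EE 1 X A := fun A => by
    obtain ⟨h1, h2, h3, h4⟩ := EE_newton X A
    rw [h1]; linear_combination -2 * h3 - tt X A * h2
  have t4 : ∀ A, tt X A ^ 4 = 24 * EE 4 X A + 176 * EE 2 X A + 736 * 1 := fun A => by
    obtain ⟨h1, h2, h3, h4⟩ := EE_newton X A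
    linear_combination -6 * h4 - 2 * tt X A * h3 - (tt X A) ^ 2 * h2 - 40 * h2
  refine ⟨?_, ?_, ?_, ?_⟩
  · simp_rw [t1]; exact z1
  · simp_rw [t2]; rw [Finset.sum_add_distrib, ← Finset.mul_sum, ← Finset.mul_sum, z2, c1]; norm_num
  · simp_rw [t3]; rw [Finset.sum_add_distrib, ← Finset.mul_sum, ← Finset.mul_sum, z1, z3]; norm_num
  · simp_rw [t4]
    rw [Finset.sum_add_distrib, Finset.sum_add_distrib, ← Finset.mul_sum, ← Finset.mul_sum,
      ← Finset.mul_sum, z2, z4, c1]; norm_num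

end NR
namespace NR

lemma card_le16 (A : Finset (Fin 16)) : A.card ≤ 16 := by
  simpa using Finset.card_le_univ A

lemma csd (X A : Finset (Fin 16)) :
    (symmDiff X A).card + 2 * (X ∩ A).card = X.card + A.card := by
  have h1 : symmDiff X A = (X ∪ A) \ (X ∩ A) := by
    rw [symmDiff_eq_sup_sdiff_inf]; rfl
  have h2 := Finset.card_union_add_card_inter X A
  have h3 := Finset.card_sdiff_add_card_eq_card
    (show X ∩ A ⊆ X ∪ A from Finset.inter_subset_left.trans Finset.subset_union_left)
  rw [h1]; omega

lemma csd_bound (X A : Finset (Fin 16)) :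
    (X ∩ A).card ≤ X.card ∧ (X ∩ A).card ≤ A.card ∧ X.card + A.card ≤ 16 + (X ∩ A).card := by
  refine ⟨Finset.card_le_card Finset.inter_subset_left,
    Finset.card_le_card Finset.inter_subset_right, ?_⟩
  have h2 := Finset.card_union_add_card_inter X A
  have := card_le16 (X ∪ A)
  omega

lemma sd_compl (X A : Finset (Fin 16)) :
    (symmDiff X Aᶜ).card + (symmDiff X A).card = 16 := by
  have h : symmDiff X Aᶜ = (symmDiff X A)ᶜ := by
    ext i; simp only [Finset.mem_symmDiff, Finset.mem_compl]; tauto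
  rw [h]
  have := Finset.card_compl_add_card (symmDiff X A)
  simpa using this

lemma compl_mem {C : Finset (Finset (Fin 16))} (hC : IsC C) {A : Finset (Fin 16)} (hA : A ∈ C) :
    Aᶜ ∈ C := by
  by_contra hn
  obtain ⟨m1, -, m3, -⟩ := moments hC A
  have hs : ∑ B ∈ C, (tt A B ^ 3 - 16 * tt A B) = 0 := by
    rw [Finset.sum_sub_distrib, ← Finset.mul_sum, m1, m3]; norm_num
  have : 0 < ∑ B ∈ C, (tt A B ^ 3 - 16 * tt A B) := by
    refine Finset.sum_pos' ?_ ⟨A, hA, ?_⟩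
    · intro B hB
      rw [tt_eq]
      by_cases h : A = B
      · subst h; simp
      · rcases (lp hC).1 A hA B hB h with h | h | h | h
        · rw [h]; norm_num
        · rw [h]; norm_num
        · rw [h]; norm_num
        · exfalso
          apply hn
          have h5 := sd_compl A B
          have h6 : (symmDiff A Bᶜ).card = 0 := by omega
          rw [Finset.card_eq_zero] at h6
          have h7 : A = Bᶜ := symmDiff_eq_bot.1 h6
          rw [h7, compl_compl]; exact hB
    · rw [tt_eq]; simp
  omega

lemma card_mem {C : Finset (Finset (Fin 16))} (hC : IsC C) (h0 : ∅ ∈ C) {A : Finset (Fin 16)}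
    (hA : A ∈ C) : (A = ∅ ∧ A.card = 0) ∨ A.card = 6 ∨ A.card = 8 ∨ A.card = 10 ∨ A.card = 16 := by
  by_cases h : A = ∅
  · left; exact ⟨h, by simp [h]⟩
  · right
    have := (lp hC).1 A hA ∅ h0 h
    have e : symmDiff A ∅ = A := symmDiff_bot A
    rwa [e] at this

/-- Number of codewords of weight `w` containing `X`. -/
def cnt (C : Finset (Finset (Fin 16))) (w : ℕ) (X : Finset (Fin 16)) : ℕ :=
  (C.filter (fun A => A.card = w ∧ X ⊆ A)).card

/-- number of codewords at distance k -/
def nd (C : Finset (Finset (Fin 16))) (X : Finset (Fin 16)) (k : ℕ) : ℕ :=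
  (C.filter (fun A => (symmDiff X A).card = k)).card

lemma nd_compl {C : Finset (Finset (Fin 16))} (hC : IsC C) (X : Finset (Fin 16)) (k : ℕ)
    (hk : k ≤ 16) : nd C X (16 - k) = nd C X k := by
  unfold nd
  refine Finset.card_bij' (fun A _ => Aᶜ) (fun A _ => Aᶜ) ?_ ?_ ?_ ?_
  · intro A hA
    rw [Finset.mem_filter] at hA ⊢
    have := sd_compl X A
    exact ⟨compl_mem hC hA.1, by omega⟩
  · intro A hA
    rw [Finset.mem_filter] at hA ⊢
    have := sd_compl X A
    exact ⟨compl_mem hC hA.1, by omega⟩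
  · intro A _; simp
  · intro A _; simp

lemma subset_iff_inter {X A : Finset (Fin 16)} : X ⊆ A ↔ (X ∩ A).card = X.card := by
  constructor
  · intro h; rw [Finset.inter_eq_left.2 h]
  · intro h
    have := Finset.eq_of_subset_of_card_le (Finset.inter_subset_left (s₁ := X) (s₂ := A)) h.ge
    exact Finset.inter_eq_left.1 this

lemma cnt6_tri {C : Finset (Finset (Fin 16))} (hC : IsC C) (h0 : ∅ ∈ C) {X : Finset (Fin 16)}
    (hX : X.card = 3) : cnt C 6 X = 4 := by
  obtain ⟨-, m2, -, m4⟩ := moments hC X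
  have hs : ∑ A ∈ C, (tt X A ^ 4 - 40 * tt X A ^ 2 + 144) = 61440 := by
    rw [Finset.sum_add_distrib, Finset.sum_sub_distrib, ← Finset.mul_sum, m2, m4]
    simp [hC.1]
  have hs2 : ∑ A ∈ C, (tt X A ^ 4 - 40 * tt X A ^ 2 + 144)
      = ∑ A ∈ C, ((if (symmDiff X A).card = 3 then 6144 else 0)
        + (if (symmDiff X A).card = 13 then 6144 else 0)) := by
    refine Finset.sum_congr rfl fun A hA => ?_
    rw [tt_eq]
    have h1 := csd X A
    obtain ⟨h2, h3, h4⟩ := csd_bound X A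
    have h5 := card_mem hC h0 hA
    have h6 : (symmDiff X A).card = 3 ∨ (symmDiff X A).card = 5 ∨ (symmDiff X A).card = 7 ∨
        (symmDiff X A).card = 9 ∨ (symmDiff X A).card = 11 ∨ (symmDiff X A).card = 13 := by omega
    rcases h6 with h | h | h | h | h | h <;> rw [h] <;> norm_num
  rw [hs2, Finset.sum_add_distrib, ← Finset.sum_filter, ← Finset.sum_filter, Finset.sum_const,
    Finset.sum_const] at hs
  have h13 := nd_compl hC X 3 (by norm_num)
  change nd C X 3 • (6144 : ℤ) + nd C X 13 • (6144 : ℤ) = 61440 at hs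
  norm_num at h13
  rw [h13] at hs
  simp only [nsmul_eq_mul] at hs
  have h5 : nd C X 3 = 5 := by omega
  have : C.filter (fun A => (symmDiff X A).card = 3)
      = insert ∅ (C.filter (fun A => A.card = 6 ∧ X ⊆ A)) := by
    ext A
    simp only [Finset.mem_filter, Finset.mem_insert]
    constructor
    · rintro ⟨hA, h⟩
      have h1 := csd X A
      obtain ⟨h2, h3, h4⟩ := csd_bound X A
      rcases card_mem hC h0 hA with h5 | h5
      · left; exact h5.1
      · right
        rw [subset_iff_inter]
        exact ⟨hA, by omega, by omega⟩
    · rintro (h | ⟨hA, h, hs⟩)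
      · subst h
        refine ⟨h0, ?_⟩
        have e : symmDiff X ∅ = X := symmDiff_bot X
        rw [e, hX]
      · refine ⟨hA, ?_⟩
        have h1 := csd X A
        rw [subset_iff_inter] at hs
        omega
  unfold nd at h5
  rw [this, Finset.card_insert_of_notMem (by simp)] at h5
  unfold cnt
  omega

lemma double3 {C : Finset (Finset (Fin 16))} (hC : IsC C) (h0 : ∅ ∈ C) {X : Finset (Fin 16)}
    (hX : X.card = 4) :
    (C.filter (fun A => A.card = 6 ∧ (X ∩ A).card = 3)).card + 4 * cnt C 6 X = 16 := by
  have h1 : ∑ T ∈ X.powersetCard 3, cnt C 6 T = 16 := by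
    rw [Finset.sum_congr rfl (fun T hT => cnt6_tri hC h0 (Finset.mem_powersetCard.1 hT).2)]
    simp [hX]
  have h2 : ∑ T ∈ X.powersetCard 3, cnt C 6 T
      = ∑ A ∈ C.filter (fun A => A.card = 6), (X ∩ A).card.choose 3 := by
    unfold cnt
    simp_rw [← Finset.filter_filter, Finset.card_filter]
    rw [Finset.sum_comm]
    refine Finset.sum_congr rfl fun A _ => ?_
    rw [← Finset.card_filter, ← Finset.card_powersetCard]
    congr 1
    ext T
    simp only [Finset.mem_filter, Finset.mem_powersetCard, Finset.subset_inter_iff]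
    tauto
  rw [h1] at h2
  have h3 : ∀ A ∈ C.filter (fun A => A.card = 6), (X ∩ A).card.choose 3
      = (if (X ∩ A).card = 3 then 1 else 0) + (if X ⊆ A then 4 else 0) := by
    intro A _
    simp only [subset_iff_inter, hX]
    have := (csd_bound X A).1
    rw [hX] at this
    generalize (X ∩ A).card = m at *
    interval_cases m <;> decide
  rw [Finset.sum_congr rfl h3, Finset.sum_add_distrib, ← Finset.card_filter, ← Finset.sum_filter,
    Finset.sum_const, Finset.filter_filter, Finset.filter_filter] at h2
  unfold cnt
  rw [smul_eq_mul] at h2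
  omega

lemma cnt_quad {C : Finset (Finset (Fin 16))} (hC : IsC C) (h0 : ∅ ∈ C) {X : Finset (Fin 16)}
    (hX : X.card = 4) : cnt C 8 X + 2 * cnt C 6 X = 3 := by
  obtain ⟨-, m2, -, m4⟩ := moments hC X
  have hs : ∑ A ∈ C, (tt X A ^ 4 - 16 * tt X A ^ 2) = 122880 := by
    rw [Finset.sum_sub_distrib, ← Finset.mul_sum, m2, m4]
    norm_num
  have hs2 : ∑ A ∈ C, (tt X A ^ 4 - 16 * tt X A ^ 2)
      = ∑ A ∈ C, ((if (symmDiff X A).card = 2 then 18432 else 0)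
        + (if (symmDiff X A).card = 14 then 18432 else 0)
        + (if (symmDiff X A).card = 4 then 3072 else 0)
        + (if (symmDiff X A).card = 12 then 3072 else 0)) := by
    refine Finset.sum_congr rfl fun A hA => ?_
    rw [tt_eq]
    have h1 := csd X A
    obtain ⟨h2, h3, h4⟩ := csd_bound X A
    have h5 := card_mem hC h0 hA
    have h6 : (symmDiff X A).card = 2 ∨ (symmDiff X A).card = 4 ∨ (symmDiff X A).card = 6 ∨
        (symmDiff X A).card = 8 ∨ (symmDiff X A).card = 10 ∨ (symmDiff X A).card = 12 ∨
        (symmDiff X A).card = 14 := by omega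
    rcases h6 with h | h | h | h | h | h | h <;> rw [h] <;> norm_num
  rw [hs2, Finset.sum_add_distrib, Finset.sum_add_distrib, Finset.sum_add_distrib,
    ← Finset.sum_filter, ← Finset.sum_filter, ← Finset.sum_filter, ← Finset.sum_filter,
    Finset.sum_const, Finset.sum_const, Finset.sum_const, Finset.sum_const] at hs
  have h14 := nd_compl hC X 2 (by norm_num)
  have h12 := nd_compl hC X 4 (by norm_num)
  change nd C X 2 • (18432 : ℤ) + nd C X 14 • (18432 : ℤ) + nd C X 4 • (3072 : ℤ)
    + nd C X 12 • (3072 : ℤ) = 122880 at hs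
  norm_num at h14 h12
  rw [h14, h12] at hs
  simp only [nsmul_eq_mul] at hs
  have e2 : nd C X 2 = cnt C 6 X := by
    unfold nd cnt
    congr 1
    refine Finset.filter_congr fun A hA => ?_
    have h1 := csd X A
    obtain ⟨h2, h3, h4⟩ := csd_bound X A
    have h5 := card_mem hC h0 hA
    rw [subset_iff_inter]
    omega
  have e4 : nd C X 4 = 1 + (C.filter (fun A => A.card = 6 ∧ (X ∩ A).card = 3)).card + cnt C 8 X := by
    have : C.filter (fun A => (symmDiff X A).card = 4)
      = ({∅} ∪ (C.filter (fun A => A.card = 6 ∧ (X ∩ A).card = 3)))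
        ∪ (C.filter (fun A => A.card = 8 ∧ X ⊆ A)) := by
      ext A
      simp only [Finset.mem_filter, Finset.mem_union, Finset.mem_singleton]
      have h1 := csd X A
      obtain ⟨h2, h3, h4⟩ := csd_bound X A
      constructor
      · rintro ⟨hA, h⟩
        have h5 := card_mem hC h0 hA
        rw [subset_iff_inter]
        rcases h5 with h5 | h5
        · left; left; exact h5.1
        · have : (A.card = 6 ∧ (X ∩ A).card = 3) ∨ (A.card = 8 ∧ (X ∩ A).card = X.card) := by
            omega
          tauto
      · rintro ((h | ⟨hA, h, h'⟩) | ⟨hA, h, hs⟩)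
        · subst h
          refine ⟨h0, ?_⟩
          have e : symmDiff X ∅ = X := symmDiff_bot X
          rw [e, hX]
        · exact ⟨hA, by omega⟩
        · rw [subset_iff_inter] at hs
          exact ⟨hA, by omega⟩
    unfold nd cnt
    rw [this, Finset.card_union_of_disjoint, Finset.card_union_of_disjoint]
    · simp
    · rw [Finset.disjoint_left]
      intro A; simp only [Finset.mem_filter, Finset.mem_singleton]
      rintro rfl; simp
    · rw [Finset.disjoint_left]
      intro A; simp only [Finset.mem_filter, Finset.mem_singleton, Finset.mem_union]
      rintro (rfl | h) h'
      · simp at h'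
      · omega
  have d3 := double3 hC h0 hX
  omega

lemma sum_ext (C : Finset (Finset (Fin 16))) (w : ℕ) {T : Finset (Fin 16)} :
    ∑ m ∈ Tᶜ, cnt C w (insert m T) = (w - T.card) * cnt C w T := by
  unfold cnt
  simp_rw [Finset.card_filter _ C]
  rw [Finset.sum_comm, Finset.mul_sum]
  refine Finset.sum_congr rfl fun A _ => ?_
  split_ifs with h
  · rw [← Finset.card_filter, mul_one, ← h.1, ← Finset.card_sdiff_of_subset h.2]
    congr 1
    ext m
    simp only [Finset.mem_filter, Finset.mem_compl, Finset.insert_subset_iff, Finset.mem_sdiff]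
    tauto
  · rw [mul_zero]
    refine Finset.sum_eq_zero fun m _ => ?_
    rw [if_neg]
    rintro ⟨h1, h2⟩
    exact h ⟨h1, (Finset.subset_insert _ _).trans h2⟩

lemma cnt8_tri {C : Finset (Finset (Fin 16))} (hC : IsC C) (h0 : ∅ ∈ C) {T : Finset (Fin 16)}
    (hT : T.card = 3) : cnt C 8 T = 3 := by
  have h1 := sum_ext C 6 (T := T)
  have h2 := sum_ext C 8 (T := T)
  rw [cnt6_tri hC h0 hT] at h1
  have h3 : ∑ m ∈ Tᶜ, (cnt C 8 (insert m T) + 2 * cnt C 6 (insert m T)) = ∑ m ∈ Tᶜ, 3 := by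
    refine Finset.sum_congr rfl fun m hm => cnt_quad hC h0 ?_
    rw [Finset.card_insert_of_notMem (by simpa using hm), hT]
  rw [Finset.sum_add_distrib, ← Finset.mul_sum, h1, h2, Finset.sum_const, Finset.card_compl, hT] at h3
  simp at h3
  omega

lemma exists_deep {C : Finset (Finset (Fin 16))} (hC : IsC C) (h0 : ∅ ∈ C) {T : Finset (Fin 16)}
    (hT : T.card = 3) : ∃ l, l ∉ T ∧ cnt C 6 (insert l T) = 0 ∧
      ∀ l', l' ∉ T → cnt C 6 (insert l' T) = 0 → l' = l := by
  have h1 := sum_ext C 6 (T := T)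
  rw [cnt6_tri hC h0 hT, hT] at h1
  have hle : ∀ m ∈ Tᶜ, cnt C 6 (insert m T) ≤ 1 := by
    intro m hm
    have := cnt_quad hC h0 (X := insert m T)
      (by rw [Finset.card_insert_of_notMem (by simpa using hm), hT])
    omega
  have hc : Tᶜ.card = 13 := by rw [Finset.card_compl, hT]; rfl
  have h2 : ∑ m ∈ Tᶜ, cnt C 6 (insert m T) = (Tᶜ.filter (fun m => cnt C 6 (insert m T) ≠ 0)).card := by
    rw [Finset.card_filter]
    refine Finset.sum_congr rfl fun m hm => ?_
    have := hle m hm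
    split_ifs <;> omega
  have h3 := Finset.card_filter_add_card_filter_not (s := Tᶜ) (fun m => cnt C 6 (insert m T) = 0)
  have h4 : (Tᶜ.filter (fun m => cnt C 6 (insert m T) = 0)).card = 1 := by
    simp only [ne_eq] at h2
    omega
  obtain ⟨l, hl⟩ := Finset.card_eq_one.1 h4
  have hl' : ∀ m, (m ∉ T ∧ cnt C 6 (insert m T) = 0) ↔ m = l := by
    intro m
    have : m ∈ Tᶜ.filter (fun m => cnt C 6 (insert m T) = 0) ↔ m ∈ ({l} : Finset (Fin 16)) := by
      rw [hl]
    simpa using this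
  have := (hl' l).2 rfl
  exact ⟨l, this.1, this.2, fun l' h h' => (hl' l').1 ⟨h, h'⟩⟩

lemma oct_closed {C : Finset (Finset (Fin 16))} (hC : IsC C) (h0 : ∅ ∈ C) {T O : Finset (Fin 16)}
    (hT : T.card = 3) (hO : O ∈ C) (hO8 : O.card = 8) (hTO : T ⊆ O) {l : Fin 16} (hl : l ∉ T)
    (hd : cnt C 6 (insert l T) = 0) : l ∈ O := by
  have h1 := cnt8_tri hC h0 hT
  have h2 := cnt_quad hC h0 (X := insert l T) (by rw [Finset.card_insert_of_notMem hl, hT])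
  have h3 : C.filter (fun A => A.card = 8 ∧ insert l T ⊆ A)
      = C.filter (fun A => A.card = 8 ∧ T ⊆ A) := by
    refine Finset.eq_of_subset_of_card_le ?_ ?_
    · intro A
      simp only [Finset.mem_filter]
      rintro ⟨a, b, c⟩
      exact ⟨a, b, (Finset.subset_insert _ _).trans c⟩
    · unfold cnt at h1 h2 hd
      omega
  have : O ∈ C.filter (fun A => A.card = 8 ∧ T ⊆ A) := by simp [hO, hO8, hTO]
  rw [← h3] at this
  exact (Finset.mem_filter.1 this).2.2 (Finset.mem_insert_self _ _)

/-- covering radius at most four -/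
lemma covering {C : Finset (Finset (Fin 16))} (hC : IsC C) (h0 : ∅ ∈ C) (X : Finset (Fin 16)) :
    ∃ A ∈ C, (symmDiff X A).card ≤ 4 := by
  by_contra hn
  push Not at hn
  have hb : ∀ A ∈ C, 5 ≤ (symmDiff X A).card ∧ (symmDiff X A).card ≤ 11 := by
    intro A hA
    have h1 := hn A hA
    have h2 := hn _ (compl_mem hC hA)
    have := sd_compl X A
    omega
  obtain ⟨-, m2, -, m4⟩ := moments hC X
  rcases Nat.even_or_odd X.card with ⟨r, hr⟩ | ⟨r, hr⟩
  · have hs : ∑ A ∈ C, (tt X A ^ 4 - 16 * tt X A ^ 2) = 122880 := by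
      rw [Finset.sum_sub_distrib, ← Finset.mul_sum, m2, m4]
      norm_num
    have : ∑ A ∈ C, (tt X A ^ 4 - 16 * tt X A ^ 2) = 0 := by
      refine Finset.sum_eq_zero fun A hA => ?_
      rw [tt_eq]
      have h1 := csd X A
      have h5 := card_mem hC h0 hA
      have h6 := hb A hA
      have h7 : (symmDiff X A).card = 6 ∨ (symmDiff X A).card = 8 ∨ (symmDiff X A).card = 10 := by
        omega
      rcases h7 with h | h | h <;> rw [h] <;> norm_num
    omega
  · have hs : ∑ A ∈ C, (tt X A ^ 4 - 40 * tt X A ^ 2 + 144) = 61440 := by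
      rw [Finset.sum_add_distrib, Finset.sum_sub_distrib, ← Finset.mul_sum, m2, m4]
      simp [hC.1]
    have : ∑ A ∈ C, (tt X A ^ 4 - 40 * tt X A ^ 2 + 144) = 0 := by
      refine Finset.sum_eq_zero fun A hA => ?_
      rw [tt_eq]
      have h1 := csd X A
      have h5 := card_mem hC h0 hA
      have h6 := hb A hA
      have h7 : (symmDiff X A).card = 5 ∨ (symmDiff X A).card = 7 ∨ (symmDiff X A).card = 9 ∨
          (symmDiff X A).card = 11 := by
        omega
      rcases h7 with h | h | h | h <;> rw [h] <;> norm_num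
    omega

end NR

namespace NR

/-- relabelling a subset -/
def mp (e : Equiv.Perm (Fin 16)) (A : Finset (Fin 16)) : Finset (Fin 16) := A.map e.toEmbedding

/-- relabelling of a code -/
def rel (e : Equiv.Perm (Fin 16)) (C : Finset (Finset (Fin 16))) : Finset (Finset (Fin 16)) :=
  C.image (mp e)

lemma mem_mp {e : Equiv.Perm (Fin 16)} {A : Finset (Fin 16)} {i : Fin 16} :
    i ∈ mp e A ↔ e.symm i ∈ A := by
  unfold mp; exact Finset.mem_map_equiv

lemma mp_inj (e : Equiv.Perm (Fin 16)) : Function.Injective (mp e) :=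
  Finset.map_injective e.toEmbedding

lemma mp_card (e : Equiv.Perm (Fin 16)) (A : Finset (Fin 16)) : (mp e A).card = A.card :=
  Finset.card_map _

lemma mp_sd (e : Equiv.Perm (Fin 16)) (A B : Finset (Fin 16)) :
    symmDiff (mp e A) (mp e B) = mp e (symmDiff A B) := by
  ext i; simp [Finset.mem_symmDiff, mem_mp]

lemma mp_subset (e : Equiv.Perm (Fin 16)) (A B : Finset (Fin 16)) :
    mp e A ⊆ mp e B ↔ A ⊆ B := Finset.map_subset_map

lemma mem_rel {e : Equiv.Perm (Fin 16)} {C : Finset (Finset (Fin 16))} {A : Finset (Fin 16)} :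
    mp e A ∈ rel e C ↔ A ∈ C := by
  unfold rel
  simp only [Finset.mem_image]
  constructor
  · rintro ⟨B, hB, h⟩; rwa [← mp_inj e h]
  · intro h; exact ⟨A, h, rfl⟩

lemma rel_isC {e : Equiv.Perm (Fin 16)} {C : Finset (Finset (Fin 16))} (hC : IsC C) :
    IsC (rel e C) := by
  refine ⟨?_, ?_⟩
  · unfold rel; rw [Finset.card_image_of_injective _ (mp_inj e), hC.1]
  · intro A hA B hB hne
    obtain ⟨A, hA', rfl⟩ := Finset.mem_image.1 hA
    obtain ⟨B, hB', rfl⟩ := Finset.mem_image.1 hB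
    rw [mp_sd, mp_card]
    exact hC.2 A hA' B hB' (fun h => hne (by rw [h]))

lemma rel_empty {e : Equiv.Perm (Fin 16)} {C : Finset (Finset (Fin 16))} (h0 : ∅ ∈ C) :
    ∅ ∈ rel e C := by
  have : mp e ∅ = ∅ := Finset.map_empty _
  rw [← this, mem_rel]; exact h0

lemma rel_cnt (e : Equiv.Perm (Fin 16)) (C : Finset (Finset (Fin 16))) (w : ℕ)
    (X : Finset (Fin 16)) : cnt (rel e C) w (mp e X) = cnt C w X := by
  unfold cnt rel
  rw [Finset.filter_image, Finset.card_image_of_injective _ (mp_inj e)]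
  simp only [mp_card, mp_subset]

lemma mp_mp (e f : Equiv.Perm (Fin 16)) (A : Finset (Fin 16)) :
    mp f (mp e A) = mp (e.trans f) A := by
  ext i; simp [mem_mp]

lemma rel_rel (e f : Equiv.Perm (Fin 16)) (C : Finset (Finset (Fin 16))) :
    rel f (rel e C) = rel (e.trans f) C := by
  unfold rel
  rw [Finset.image_image]
  congr 1
  funext A
  exact mp_mp e f A

lemma mp4 (e : Equiv.Perm (Fin 16)) (a b c d : Fin 16) :
    mp e {a, b, c, d} = {e a, e b, e c, e d} := by
  simp [mp]

/-- four distinct points -/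
abbrev D4 (a b c d : Fin 16) : Prop := a ≠ b ∧ a ≠ c ∧ a ≠ d ∧ b ≠ c ∧ b ≠ d ∧ c ≠ d

lemma card4 {a b c d : Fin 16} (h : D4 a b c d) : ({a, b, c, d} : Finset (Fin 16)).card = 4 := by
  obtain ⟨h1, h2, h3, h4, h5, h6⟩ := h
  rw [Finset.card_insert_of_notMem (by simp [*]), Finset.card_insert_of_notMem (by simp [*]),
    Finset.card_insert_of_notMem (by simp [*]), Finset.card_singleton]

lemma card3 {a b c : Fin 16} (h1 : a ≠ b) (h2 : a ≠ c) (h3 : b ≠ c) :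
    ({a, b, c} : Finset (Fin 16)).card = 3 := by
  rw [Finset.card_insert_of_notMem (by simp [*]), Finset.card_insert_of_notMem (by simp [*]),
    Finset.card_singleton]

/-- A labelled code: deep quadruples are those with zero sum. -/
def Good (D : Finset (Finset (Fin 16))) : Prop :=
  IsC D ∧ ∅ ∈ D ∧ ∀ a b c d : Fin 16, D4 a b c d →
    (cnt D 6 {a, b, c, d} = 0 ↔ a ^^^ b ^^^ c ^^^ d = 0)

/-- four bits -/
def mk (x y z w : Bool) : Fin 16 :=
  ⟨x.toNat + 2 * y.toNat + 4 * z.toNat + 8 * w.toNat, by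
    cases x <;> cases y <;> cases z <;> cases w <;> decide⟩

lemma mk_xor : ∀ x y z w x' y' z' w' : Bool,
    mk x y z w ^^^ mk x' y' z' w' = mk (x ^^ x') (y ^^ y') (z ^^ z') (w ^^ w') := by decide


lemma closed4 {C : Finset (Finset (Fin 16))} (hC : IsC C) (h0 : ∅ ∈ C) {O : Finset (Fin 16)}
    (hO : O ∈ C) (hO8 : O.card = 8) {a b c d : Fin 16} (hD : D4 a b c d)
    (hd : cnt C 6 {a, b, c, d} = 0) (ha : a ∈ O) (hb : b ∈ O) (hc : c ∈ O) : d ∈ O := by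
  obtain ⟨h1, h2, h3, h4, h5, h6⟩ := hD
  refine oct_closed hC h0 (card3 h1 h2 h4) hO hO8 ?_ (l := d) ?_ ?_
  · intro i; simp only [Finset.mem_insert, Finset.mem_singleton]; rintro (rfl | rfl | rfl) <;> assumption
  · simp only [Finset.mem_insert, Finset.mem_singleton]; rintro (rfl | rfl | rfl) <;> simp_all
  · rw [← hd]; congr 1; ext i; simp only [Finset.mem_insert, Finset.mem_singleton]; tauto

lemma oct_even {C : Finset (Finset (Fin 16))} (hC : IsC C) (h0 : ∅ ∈ C) {O : Finset (Fin 16)}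
    (hO : O ∈ C) (hO8 : O.card = 8) {a b c d : Fin 16} (hD : D4 a b c d)
    (hd : cnt C 6 {a, b, c, d} = 0) :
    (decide (a ∉ O) ^^ decide (b ∉ O) ^^ decide (c ∉ O) ^^ decide (d ∉ O)) = false := by
  have hO' := compl_mem hC hO
  have hO8' : Oᶜ.card = 8 := by rw [Finset.card_compl, hO8]; rfl
  have e1 : ({b, c, d, a} : Finset (Fin 16)) = {a, b, c, d} := by
    ext i; simp only [Finset.mem_insert, Finset.mem_singleton]; tauto
  have e2 : ({a, c, d, b} : Finset (Fin 16)) = {a, b, c, d} := by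
    ext i; simp only [Finset.mem_insert, Finset.mem_singleton]; tauto
  have e3 : ({a, b, d, c} : Finset (Fin 16)) = {a, b, c, d} := by
    ext i; simp only [Finset.mem_insert, Finset.mem_singleton]; tauto
  have D1 : D4 b c d a := by obtain ⟨h1, h2, h3, h4, h5, h6⟩ := hD; exact ⟨h4, h5, h1.symm, h6, h2.symm, h3.symm⟩
  have D2 : D4 a c d b := by obtain ⟨h1, h2, h3, h4, h5, h6⟩ := hD; exact ⟨h2, h3, h1, h6, h4.symm, h5.symm⟩
  have D3 : D4 a b d c := by obtain ⟨h1, h2, h3, h4, h5, h6⟩ := hD; exact ⟨h1, h3, h2, h5, h4, h6.symm⟩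
  have A0 := closed4 hC h0 hO hO8 hD hd
  have A1 := closed4 hC h0 hO hO8 D1 (by rw [e1]; exact hd)
  have A2 := closed4 hC h0 hO hO8 D2 (by rw [e2]; exact hd)
  have A3 := closed4 hC h0 hO hO8 D3 (by rw [e3]; exact hd)
  have B0 := closed4 hC h0 hO' hO8' hD hd
  have B1 := closed4 hC h0 hO' hO8' D1 (by rw [e1]; exact hd)
  have B2 := closed4 hC h0 hO' hO8' D2 (by rw [e2]; exact hd)
  have B3 := closed4 hC h0 hO' hO8' D3 (by rw [e3]; exact hd)
  simp only [Finset.mem_compl] at B0 B1 B2 B3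
  by_cases ha : a ∈ O <;> by_cases hb : b ∈ O <;> by_cases hc : c ∈ O <;> by_cases hd : d ∈ O <;>
    simp_all

lemma oct_exists {C : Finset (Finset (Fin 16))} (hC : IsC C) (h0 : ∅ ∈ C) {Q : Finset (Fin 16)}
    (hQ : Q.card = 4) (hn : cnt C 6 Q ≠ 0) :
    ∃ O ∈ C, O.card = 8 ∧ Q ⊆ O ∧ ∀ O' ∈ C, O'.card = 8 → Q ⊆ O' → O' = O := by
  have h := cnt_quad hC h0 hQ
  have h1 : cnt C 8 Q = 1 := by omega
  obtain ⟨O, hO⟩ := Finset.card_eq_one.1 h1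
  have hm : ∀ O', (O' ∈ C ∧ O'.card = 8 ∧ Q ⊆ O') ↔ O' = O := by
    intro O'
    have : O' ∈ C.filter (fun A => A.card = 8 ∧ Q ⊆ A) ↔ O' ∈ ({O} : Finset _) := by rw [← hO]
    simpa using this
  have := (hm O).2 rfl
  exact ⟨O, this.1, this.2.1, this.2.2, fun O' a b c => (hm O').1 ⟨a, b, c⟩⟩

lemma hex_exists {C : Finset (Finset (Fin 16))} {Q : Finset (Fin 16)} (hn : cnt C 6 Q ≠ 0) :
    ∃ H ∈ C, H.card = 6 ∧ Q ⊆ H := by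
  obtain ⟨H, hH⟩ := Finset.card_ne_zero.1 hn
  rw [Finset.mem_filter] at hH
  exact ⟨H, hH.1, hH.2.1, hH.2.2⟩

lemma hex_cnt {C : Finset (Finset (Fin 16))} {Q H : Finset (Fin 16)} (hH : H ∈ C)
    (h6 : H.card = 6) (hQ : Q ⊆ H) : cnt C 6 Q ≠ 0 :=
  Finset.card_ne_zero.2 ⟨H, by simp [hH, h6, hQ]⟩

lemma rot4 (a b c d : Fin 16) : insert d ({a, b, c} : Finset (Fin 16)) = {a, b, c, d} := by
  ext i; simp only [Finset.mem_insert, Finset.mem_singleton]; tauto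
lemma rot4' (a b c d : Fin 16) : insert c ({a, b, d} : Finset (Fin 16)) = {a, b, c, d} := by
  ext i; simp only [Finset.mem_insert, Finset.mem_singleton]; tauto
lemma rot4b (a b c d : Fin 16) : insert b ({a, c, d} : Finset (Fin 16)) = {a, b, c, d} := by
  ext i; simp only [Finset.mem_insert, Finset.mem_singleton]; tauto
lemma un42 (a b c d e f : Fin 16) :
    ({a, b, c, d} : Finset (Fin 16)) ∪ {e, f} = {a, b, c, d, e, f} := by
  ext i; simp only [Finset.mem_insert, Finset.mem_singleton, Finset.mem_union]; tauto

lemma oct_frame {C : Finset (Finset (Fin 16))} (hC : IsC C) (h0 : ∅ ∈ C) {T O8 : Finset (Fin 16)}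
    {q p : Fin 16} (hT : T.card = 3) (hO : O8 ∈ C)
    (hO8 : O8.card = 8) (hTO : insert q T ⊆ O8) (hp : p ∉ O8)
    (hu : ∀ O' ∈ C, O'.card = 8 → insert q T ⊆ O' → O' = O8) :
    ∃ O ∈ C, O.card = 8 ∧ T ⊆ O ∧ p ∈ O ∧ q ∉ O := by
  have hTO' : T ⊆ O8 := (Finset.subset_insert _ _).trans hTO
  have hpT : p ∉ T := fun h => hp (hTO' h)
  have hnd : cnt C 6 (insert p T) ≠ 0 := fun h => hp (oct_closed hC h0 hT hO hO8 hTO' hpT h)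
  obtain ⟨O, h1, h2, h3, -⟩ := oct_exists hC h0
    (by rw [Finset.card_insert_of_notMem hpT, hT]) hnd
  refine ⟨O, h1, h2, (Finset.subset_insert _ _).trans h3, h3 (Finset.mem_insert_self _ _), ?_⟩
  intro hqO
  have := hu O h1 h2 (Finset.insert_subset hqO ((Finset.subset_insert _ _).trans h3))
  exact hp (this ▸ h3 (Finset.mem_insert_self _ _))

lemma last15 : ∀ x : Fin 16, x ≠ 0 → x ≠ 1 → x ≠ 2 → x ≠ 4 → x ≠ 8 →
    (0 ^^^ 1 ^^^ 2 ^^^ x ≠ 0) → (0 ^^^ 1 ^^^ 4 ^^^ x ≠ 0) → (0 ^^^ 1 ^^^ 8 ^^^ x ≠ 0) →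
    (0 ^^^ 2 ^^^ 4 ^^^ x ≠ 0) → (0 ^^^ 2 ^^^ 8 ^^^ x ≠ 0) → (0 ^^^ 4 ^^^ 8 ^^^ x ≠ 0) →
    (1 ^^^ 2 ^^^ 4 ^^^ x ≠ 0) → (1 ^^^ 2 ^^^ 8 ^^^ x ≠ 0) → (1 ^^^ 4 ^^^ 8 ^^^ x ≠ 0) →
    (2 ^^^ 4 ^^^ 8 ^^^ x ≠ 0) → x = 15 := by
  intro x
  fin_cases x <;> first | (intros; rfl) | simp

lemma xor_solve : ∀ a b c d : Fin 16, a ^^^ b ^^^ c ^^^ d = 0 → d = a ^^^ b ^^^ c := by decide +kernel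

theorem labelling {C : Finset (Finset (Fin 16))} (hC : IsC C) (h0 : ∅ ∈ C) {p0 p1 p2 : Fin 16}
    (h01 : p0 ≠ p1) (h02 : p0 ≠ p2) (h12 : p1 ≠ p2) :
    ∃ e : Equiv.Perm (Fin 16), e p0 = 0 ∧ e p1 = 1 ∧ e p2 = 2 ∧ Good (rel e C) ∧
      {0, 1, 2, 4, 8, 15} ∈ rel e C := by
  have hT := card3 h01 h02 h12
  obtain ⟨l, hl, hl0, hlu⟩ := exists_deep hC h0 hT
  obtain ⟨p4, hp4⟩ : ∃ p4, p4 ∉ insert l ({p0, p1, p2} : Finset (Fin 16)) := by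
    by_contra hn
    push Not at hn
    have h := Finset.card_le_card (fun x _ => hn x : (Finset.univ : Finset (Fin 16)) ⊆ _)
    have := Finset.card_insert_le l ({p0, p1, p2} : Finset (Fin 16))
    rw [hT] at this
    simp at h
    omega
  rw [Finset.mem_insert, not_or] at hp4
  obtain ⟨hp4l, hp4T⟩ := hp4
  have hnd : cnt C 6 (insert p4 {p0, p1, p2}) ≠ 0 := fun h => hp4l (hlu _ hp4T h)
  have eQ : insert p4 ({p0, p1, p2} : Finset (Fin 16)) = {p0, p1, p2, p4} := rot4 _ _ _ _
  rw [eQ] at hnd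
  simp only [Finset.mem_insert, Finset.mem_singleton, not_or] at hp4T
  obtain ⟨h40, h41, h42⟩ := hp4T
  have hQ : ({p0, p1, p2, p4} : Finset (Fin 16)).card = 4 :=
    card4 ⟨h01, h02, Ne.symm h40, h12, Ne.symm h41, Ne.symm h42⟩
  obtain ⟨H, hHC, hH6, hQH⟩ := hex_exists hnd
  obtain ⟨O8, hO8C, hO88, hQO8, hO8u⟩ := oct_exists hC h0 hQ hnd
  have hsd : (H \ {p0, p1, p2, p4}).card = 2 := by
    rw [Finset.card_sdiff_of_subset hQH, hH6, hQ]
  obtain ⟨p8, p15, h815, hs⟩ := Finset.card_eq_two.1 hsd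
  have hp8 : p8 ∈ H \ {p0, p1, p2, p4} := by rw [hs]; simp
  have hp15 : p15 ∈ H \ {p0, p1, p2, p4} := by rw [hs]; simp
  have hHeq : H = {p0, p1, p2, p4, p8, p15} := by
    rw [← Finset.union_sdiff_of_subset hQH, hs, un42]
  rw [Finset.mem_sdiff] at hp8 hp15
  have hp8O : p8 ∉ O8 := by
    intro h
    have h1 : insert p8 ({p0, p1, p2, p4} : Finset (Fin 16)) ⊆ H ∩ O8 :=
      Finset.insert_subset (Finset.mem_inter.2 ⟨hp8.1, h⟩) (Finset.subset_inter hQH hQO8)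
    have h2 := Finset.card_le_card h1
    rw [Finset.card_insert_of_notMem hp8.2, hQ] at h2
    have h3 := csd H O8
    have h4 := hC.2 H hHC O8 hO8C (by rintro rfl; omega)
    omega
  obtain ⟨hp8H, hp8Q⟩ := hp8
  obtain ⟨hp15H, hp15Q⟩ := hp15
  simp only [Finset.mem_insert, Finset.mem_singleton, not_or] at hp8Q hp15Q
  obtain ⟨h80, h81, h82, h84⟩ := hp8Q
  obtain ⟨h150, h151, h152, h154⟩ := hp15Q
  have f1 : insert p1 ({p0, p2, p4} : Finset (Fin 16)) = {p0, p1, p2, p4} := rot4b _ _ _ _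
  have f2 : insert p2 ({p0, p1, p4} : Finset (Fin 16)) = {p0, p1, p2, p4} := rot4' _ _ _ _
  have f4 : insert p4 ({p0, p1, p2} : Finset (Fin 16)) = {p0, p1, p2, p4} := rot4 _ _ _ _
  obtain ⟨O1, hO1C, hO18, hO1T, hO1p, hO1q⟩ := oct_frame hC h0 (T := {p0, p2, p4}) (q := p1) (p := p8)
    (card3 h02 (Ne.symm h40) (Ne.symm h42)) hO8C hO88 (by rw [f1]; exact hQO8) hp8O
    (by rw [f1]; exact hO8u)
  obtain ⟨O2, hO2C, hO28, hO2T, hO2p, hO2q⟩ := oct_frame hC h0 (T := {p0, p1, p4}) (q := p2) (p := p8)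
    (card3 h01 (Ne.symm h40) (Ne.symm h41)) hO8C hO88 (by rw [f2]; exact hQO8) hp8O
    (by rw [f2]; exact hO8u)
  obtain ⟨O4, hO4C, hO48, hO4T, hO4p, hO4q⟩ := oct_frame hC h0 (T := {p0, p1, p2}) (q := p4) (p := p8)
    hT hO8C hO88 (by rw [f4]; exact hQO8) hp8O
    (by rw [f4]; exact hO8u)
  simp only [Finset.insert_subset_iff, Finset.singleton_subset_iff] at hO1T hO2T hO4T hQO8
  let lab : Fin 16 → Fin 16 := fun p =>
    mk (decide (p ∉ O1)) (decide (p ∉ O2)) (decide (p ∉ O4)) (decide (p ∉ O8))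
  have lab0 : lab p0 = 0 := by simp only [lab, hO1T, hO2T, hO4T, hQO8]; decide
  have lab1 : lab p1 = 1 := by simp only [lab, hO1q, hO2T, hO4T, hQO8]; decide
  have lab2 : lab p2 = 2 := by simp only [lab, hO1T, hO2q, hO4T, hQO8]; decide
  have lab4 : lab p4 = 4 := by simp only [lab, hO1T, hO2T, hO4q, hQO8]; decide
  have lab8 : lab p8 = 8 := by simp only [lab, hO1p, hO2p, hO4p, hp8O]; decide
  have labx : ∀ a b c d, D4 a b c d → cnt C 6 {a, b, c, d} = 0 →
      lab a ^^^ lab b ^^^ lab c ^^^ lab d = 0 := by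
    intro a b c d hD hd
    simp only [lab, mk_xor]
    rw [oct_even hC h0 hO1C hO18 hD hd, oct_even hC h0 hO2C hO28 hD hd,
      oct_even hC h0 hO4C hO48 hD hd, oct_even hC h0 hO8C hO88 hD hd]
    rfl
  have deepE : ∀ a b c, a ≠ b → a ≠ c → b ≠ c → ∃ d, D4 a b c d ∧ cnt C 6 {a, b, c, d} = 0 := by
    intro a b c h1 h2 h3
    obtain ⟨d, hd, hd0, -⟩ := exists_deep hC h0 (card3 h1 h2 h3)
    simp only [Finset.mem_insert, Finset.mem_singleton, not_or] at hd
    refine ⟨d, ⟨h1, h2, Ne.symm hd.1, h3, Ne.symm hd.2.1, Ne.symm hd.2.2⟩, ?_⟩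
    rw [← rot4 a b c d]; exact hd0
  have rng : ∀ x y z : Fin 16, x ≠ y → x ≠ z → y ≠ z → (∃ p, lab p = x) → (∃ p, lab p = y) →
      (∃ p, lab p = z) → ∃ p, lab p = x ^^^ y ^^^ z := by
    rintro x y z hxy hxz hyz ⟨a, rfl⟩ ⟨b, rfl⟩ ⟨c, rfl⟩
    obtain ⟨d, hD, hd⟩ := deepE a b c (fun h => hxy (by rw [h])) (fun h => hxz (by rw [h]))
      (fun h => hyz (by rw [h]))
    exact ⟨d, xor_solve _ _ _ _ (labx a b c d hD hd)⟩
  have surj : Function.Surjective lab := by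
    have r0 : ∃ p, lab p = 0 := ⟨_, lab0⟩
    have r1 : ∃ p, lab p = 1 := ⟨_, lab1⟩
    have r2 : ∃ p, lab p = 2 := ⟨_, lab2⟩
    have r4 : ∃ p, lab p = 4 := ⟨_, lab4⟩
    have r8 : ∃ p, lab p = 8 := ⟨_, lab8⟩
    have r3 : ∃ p, lab p = 3 := rng 0 1 2 (by decide) (by decide) (by decide) r0 r1 r2
    have r5 : ∃ p, lab p = 5 := rng 0 1 4 (by decide) (by decide) (by decide) r0 r1 r4
    have r6 : ∃ p, lab p = 6 := rng 0 2 4 (by decide) (by decide) (by decide) r0 r2 r4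
    have r7 : ∃ p, lab p = 7 := rng 1 2 4 (by decide) (by decide) (by decide) r1 r2 r4
    have r9 : ∃ p, lab p = 9 := rng 0 1 8 (by decide) (by decide) (by decide) r0 r1 r8
    have r10 : ∃ p, lab p = 10 := rng 0 2 8 (by decide) (by decide) (by decide) r0 r2 r8
    have r11 : ∃ p, lab p = 11 := rng 1 2 8 (by decide) (by decide) (by decide) r1 r2 r8
    have r12 : ∃ p, lab p = 12 := rng 0 4 8 (by decide) (by decide) (by decide) r0 r4 r8
    have r13 : ∃ p, lab p = 13 := rng 1 4 8 (by decide) (by decide) (by decide) r1 r4 r8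
    have r14 : ∃ p, lab p = 14 := rng 2 4 8 (by decide) (by decide) (by decide) r2 r4 r8
    have r15 : ∃ p, lab p = 15 := rng 0 7 8 (by decide) (by decide) (by decide) r0 r7 r8
    intro x
    fin_cases x <;> assumption
  have bij : Function.Bijective lab := Finite.surjective_iff_bijective.1 surj
  have labx' : ∀ a b c d, D4 a b c d →
      (cnt C 6 {a, b, c, d} = 0 ↔ lab a ^^^ lab b ^^^ lab c ^^^ lab d = 0) := by
    intro a b c d hD
    refine ⟨labx a b c d hD, fun h => ?_⟩
    obtain ⟨d', hD', hd'⟩ := deepE a b c hD.1 hD.2.1 hD.2.2.2.1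
    have e1 := xor_solve _ _ _ _ h
    have e2 := xor_solve _ _ _ _ (labx a b c d' hD' hd')
    have : d = d' := bij.1 (e1.trans e2.symm)
    rw [this]; exact hd'
  have lab15 : lab p15 = 15 := by
    have key : ∀ a b c, a ∈ H → b ∈ H → c ∈ H → D4 a b c p15 →
        lab a ^^^ lab b ^^^ lab c ^^^ lab p15 ≠ 0 := by
      intro a b c ha hb hc hD h
      rw [← labx' a b c p15 hD] at h
      refine hex_cnt hHC hH6 ?_ h
      intro i; simp only [Finset.mem_insert, Finset.mem_singleton]
      rintro (rfl | rfl | rfl | rfl) <;> assumption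
    have m0 : p0 ∈ H := by rw [hHeq]; simp
    have m1 : p1 ∈ H := by rw [hHeq]; simp
    have m2 : p2 ∈ H := by rw [hHeq]; simp
    have m4 : p4 ∈ H := by rw [hHeq]; simp
    apply last15
    · rw [← lab0]; exact fun h => h150 (bij.1 h)
    · rw [← lab1]; exact fun h => h151 (bij.1 h)
    · rw [← lab2]; exact fun h => h152 (bij.1 h)
    · rw [← lab4]; exact fun h => h154 (bij.1 h)
    · rw [← lab8]; exact fun h => h815 (bij.1 h).symm
    · have := key p0 p1 p2 m0 m1 m2 (by
      refine ⟨?_, ?_, ?_, ?_, ?_, ?_⟩ <;> first | assumption | (apply Ne.symm; assumption)); rwa [lab0, lab1, lab2] at this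
    · have := key p0 p1 p4 m0 m1 m4 (by
      refine ⟨?_, ?_, ?_, ?_, ?_, ?_⟩ <;> first | assumption | (apply Ne.symm; assumption)); rwa [lab0, lab1, lab4] at this
    · have := key p0 p1 p8 m0 m1 hp8H (by
      refine ⟨?_, ?_, ?_, ?_, ?_, ?_⟩ <;> first | assumption | (apply Ne.symm; assumption)); rwa [lab0, lab1, lab8] at this
    · have := key p0 p2 p4 m0 m2 m4 (by
      refine ⟨?_, ?_, ?_, ?_, ?_, ?_⟩ <;> first | assumption | (apply Ne.symm; assumption)); rwa [lab0, lab2, lab4] at this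
    · have := key p0 p2 p8 m0 m2 hp8H (by
      refine ⟨?_, ?_, ?_, ?_, ?_, ?_⟩ <;> first | assumption | (apply Ne.symm; assumption)); rwa [lab0, lab2, lab8] at this
    · have := key p0 p4 p8 m0 m4 hp8H (by
      refine ⟨?_, ?_, ?_, ?_, ?_, ?_⟩ <;> first | assumption | (apply Ne.symm; assumption)); rwa [lab0, lab4, lab8] at this
    · have := key p1 p2 p4 m1 m2 m4 (by
      refine ⟨?_, ?_, ?_, ?_, ?_, ?_⟩ <;> first | assumption | (apply Ne.symm; assumption)); rwa [lab1, lab2, lab4] at this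
    · have := key p1 p2 p8 m1 m2 hp8H (by
      refine ⟨?_, ?_, ?_, ?_, ?_, ?_⟩ <;> first | assumption | (apply Ne.symm; assumption)); rwa [lab1, lab2, lab8] at this
    · have := key p1 p4 p8 m1 m4 hp8H (by
      refine ⟨?_, ?_, ?_, ?_, ?_, ?_⟩ <;> first | assumption | (apply Ne.symm; assumption)); rwa [lab1, lab4, lab8] at this
    · have := key p2 p4 p8 m2 m4 hp8H (by
      refine ⟨?_, ?_, ?_, ?_, ?_, ?_⟩ <;> first | assumption | (apply Ne.symm; assumption)); rwa [lab2, lab4, lab8] at this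
  let e : Equiv.Perm (Fin 16) := Equiv.ofBijective lab bij
  refine ⟨e, lab0, lab1, lab2, ⟨rel_isC hC, rel_empty h0, ?_⟩, ?_⟩
  · intro a b c d hD
    obtain ⟨a, rfl⟩ := e.surjective a
    obtain ⟨b, rfl⟩ := e.surjective b
    obtain ⟨c, rfl⟩ := e.surjective c
    obtain ⟨d, rfl⟩ := e.surjective d
    rw [← mp4, rel_cnt]
    apply labx'
    simpa [D4] using hD
  · have : mp e H = {0, 1, 2, 4, 8, 15} := by
      rw [hHeq, ← lab0, ← lab1, ← lab2, ← lab4, ← lab8, ← lab15]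
      simp [mp, e]
    rw [← this, mem_rel]; exact hHC

end NR

namespace NR

/-- subset coded by a bit mask -/
def ofMask (n : ℕ) : Finset (Fin 16) := Finset.univ.filter (fun i => n.testBit i.val = true)

lemma mem_ofMask {n : ℕ} {i : Fin 16} : i ∈ ofMask n ↔ n.testBit i.val = true := by
  simp [ofMask]

/-- all labels -/
def F16 : List (Fin 16) := [0, 1, 2, 3, 4, 5, 6, 7, 8, 9, 10, 11, 12, 13, 14, 15]

lemma mem_F16 : ∀ i : Fin 16, i ∈ F16 := by decide

/-- population count -/
def pc (n : ℕ) : ℕ := F16.countP (fun i => n.testBit i.val)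

lemma card_ofMask (n : ℕ) : (ofMask n).card = pc n := by
  have h : F16 = List.finRange 16 := by decide
  unfold pc ofMask
  rw [h, List.countP_eq_length_filter]
  simp [Finset.univ, Fintype.elems, Finset.filter, Finset.card]

lemma ofMask_and (m n : ℕ) : ofMask (m &&& n) = ofMask m ∩ ofMask n := by
  ext i; simp [mem_ofMask, Nat.testBit_and]

lemma ofMask_compl (n : ℕ) : ofMask (65535 ^^^ n) = (ofMask n)ᶜ := by
  ext i
  have h : Nat.testBit 65535 i.val = true := by revert i; decide
  rw [Finset.mem_compl, mem_ofMask, mem_ofMask, Nat.testBit_xor, h]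
  simp

lemma ofMask_inj {m n : ℕ} (hm : m < 65536) (hn : n < 65536) (h : ofMask m = ofMask n) : m = n := by
  apply Nat.eq_of_testBit_eq
  intro i
  by_cases hi : i < 16
  · have := Finset.ext_iff.1 h ⟨i, hi⟩
    rw [mem_ofMask, mem_ofMask] at this
    exact Bool.eq_iff_iff.2 this
  · have h1 : (65536 : ℕ) ≤ 2 ^ i :=
      (by norm_num : (65536 : ℕ) = 2 ^ 16) ▸ Nat.pow_le_pow_right (by norm_num) (by omega)
    rw [Nat.testBit_lt_two_pow (by omega), Nat.testBit_lt_two_pow (by omega)]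

/-- mask of a list of labels -/
def msk : List (Fin 16) → ℕ
  | [] => 0
  | i :: t => 2 ^ i.val ||| msk t

lemma mem_msk {l : List (Fin 16)} {i : Fin 16} : i ∈ ofMask (msk l) ↔ i ∈ l := by
  rw [mem_ofMask]
  induction l with
  | nil => simp [msk]
  | cons a t ih =>
    rw [msk, Nat.testBit_or, Bool.or_eq_true, ih, Nat.testBit_two_pow, List.mem_cons,
      decide_eq_true_iff, Fin.ext_iff]
    exact or_congr_left eq_comm

/-- compatible with all known hexads -/
def compat (known : List ℕ) (m : ℕ) : Bool :=
  known.all fun k => pc (m &&& k) == 6 || (Nat.ble 1 (pc (m &&& k)) && Nat.ble (pc (m &&& k)) 3)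

/-- the six points contain no zero-sum quadruple that uses a new point -/
def free (a b c d e f : Fin 16) : Bool :=
  a ^^^ b ^^^ c ^^^ e != 0 && a ^^^ b ^^^ d ^^^ e != 0 && a ^^^ c ^^^ d ^^^ e != 0 &&
  b ^^^ c ^^^ d ^^^ e != 0 && e != a && e != b && e != c && e != d && e != f &&
  f != a && f != b && f != c && f != d &&
  a ^^^ b ^^^ e ^^^ f != 0 && a ^^^ c ^^^ e ^^^ f != 0 && a ^^^ d ^^^ e ^^^ f != 0 &&
  b ^^^ c ^^^ e ^^^ f != 0 && b ^^^ d ^^^ e ^^^ f != 0 && c ^^^ d ^^^ e ^^^ f != 0 &&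
  a ^^^ b ^^^ c ^^^ f != 0 && a ^^^ b ^^^ d ^^^ f != 0 && a ^^^ c ^^^ d ^^^ f != 0 &&
  b ^^^ c ^^^ d ^^^ f != 0

/-- nondegenerate quadruple -/
def okq (a b c d : Fin 16) : Bool := decide (D4 a b c d) && a ^^^ b ^^^ c ^^^ d != 0

/-- one propagation step -/
def step (known : List ℕ) (a b c d : Fin 16) (hs : List ℕ) : Bool :=
  okq a b c d && F16.all fun e => F16.all fun f =>
    !(free a b c d e f) || hs.elem (msk [a, b, c, d, e, f]) ||
      !(compat known (msk [a, b, c, d, e, f]))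

/-- iterate the propagation -/
def run : List ℕ → List (Fin 16 × Fin 16 × Fin 16 × Fin 16 × ℕ) → Bool
  | _, [] => true
  | known, (a, b, c, d, h) :: t => step known a b c d [h] && run (h :: known) t

lemma okq_iff {a b c d : Fin 16} : okq a b c d = true ↔ D4 a b c d ∧ a ^^^ b ^^^ c ^^^ d ≠ 0 := by
  simp [okq]

/-- a hexad of D given by a mask -/
def HexIn (D : Finset (Finset (Fin 16))) (n : ℕ) : Prop := ofMask n ∈ D ∧ (ofMask n).card = 6

lemma good_ne {D : Finset (Finset (Fin 16))} (hD : Good D) {H : Finset (Fin 16)} (hH : H ∈ D)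
    (h6 : H.card = 6) {a b c d : Fin 16} (h4 : D4 a b c d) (ha : a ∈ H) (hb : b ∈ H) (hc : c ∈ H)
    (hd : d ∈ H) : a ^^^ b ^^^ c ^^^ d ≠ 0 := by
  intro h
  rw [← hD.2.2 a b c d h4] at h
  refine hex_cnt hH h6 ?_ h
  intro i; simp only [Finset.mem_insert, Finset.mem_singleton]
  rintro (rfl | rfl | rfl | rfl) <;> assumption

lemma step_sound {D : Finset (Finset (Fin 16))} (hD : Good D) {known : List ℕ}
    (hk : ∀ k ∈ known, HexIn D k) {a b c d : Fin 16} {hs : List ℕ}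
    (h : step known a b c d hs = true) : ∃ n ∈ hs, HexIn D n := by
  unfold step at h
  rw [Bool.and_eq_true, okq_iff] at h
  obtain ⟨⟨h4, hx⟩, hall⟩ := h
  have hn : cnt D 6 {a, b, c, d} ≠ 0 := fun h => hx ((hD.2.2 a b c d h4).1 h)
  obtain ⟨H, hHD, hH6, hQH⟩ := hex_exists hn
  have hsd : (H \ {a, b, c, d}).card = 2 := by
    rw [Finset.card_sdiff_of_subset hQH, hH6, card4 h4]
  obtain ⟨e, f, hef, hs'⟩ := Finset.card_eq_two.1 hsd
  have he : e ∈ H \ {a, b, c, d} := by rw [hs']; simp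
  have hf : f ∈ H \ {a, b, c, d} := by rw [hs']; simp
  have hHeq : H = {a, b, c, d, e, f} := by
    rw [← Finset.union_sdiff_of_subset hQH, hs', un42]
  have hHm : ofMask (msk [a, b, c, d, e, f]) = H := by
    ext i; rw [mem_msk, hHeq]; simp
  rw [Finset.mem_sdiff] at he hf
  obtain ⟨heH, heQ⟩ := he
  obtain ⟨hfH, hfQ⟩ := hf
  simp only [Finset.mem_insert, Finset.mem_singleton, not_or] at heQ hfQ
  obtain ⟨ea, eb, ec, ed⟩ := heQ
  obtain ⟨fa, fb, fc, fd⟩ := hfQ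
  simp only [Finset.insert_subset_iff, Finset.singleton_subset_iff] at hQH
  obtain ⟨ma, mb, mc, md⟩ := hQH
  obtain ⟨h1, h2, h3, h4, h5, h6⟩ := h4
  have hfree : free a b c d e f = true := by
    simp only [free, Bool.and_eq_true, bne_iff_ne]
    refine ⟨⟨⟨⟨⟨⟨⟨⟨⟨⟨⟨⟨⟨⟨⟨⟨⟨⟨⟨⟨⟨⟨?_, ?_⟩, ?_⟩, ?_⟩, ?_⟩, ?_⟩, ?_⟩, ?_⟩, ?_⟩, ?_⟩, ?_⟩, ?_⟩, ?_⟩, ?_⟩,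
      ?_⟩, ?_⟩, ?_⟩, ?_⟩, ?_⟩, ?_⟩, ?_⟩, ?_⟩, ?_⟩ <;> first
        | assumption
        | (refine good_ne hD hHD hH6 ⟨?_, ?_, ?_, ?_, ?_, ?_⟩ ?_ ?_ ?_ ?_ <;> first
          | assumption
          | (apply Ne.symm; assumption))
  have hcomp : compat known (msk [a, b, c, d, e, f]) = true := by
    unfold compat
    rw [List.all_eq_true]
    intro k hkk
    rw [Bool.or_eq_true, beq_iff_eq, Bool.and_eq_true, Nat.ble_eq, Nat.ble_eq, ← card_ofMask,
      ofMask_and, hHm]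
    obtain ⟨k1, k2⟩ := hk k hkk
    by_cases hne : H = ofMask k
    · left; rw [← hne, Finset.inter_self, hH6]
    · right
      have q1 := csd H (ofMask k)
      have q2 := (lp hD.1).1 H hHD _ k1 hne
      omega
  rw [List.all_eq_true] at hall
  have h7 := hall e (mem_F16 e)
  rw [List.all_eq_true] at h7
  have h8 := h7 f (mem_F16 f)
  rw [hfree, hcomp] at h8
  simp only [Bool.not_true, Bool.false_or, Bool.or_false, List.elem_eq_mem, decide_eq_true_iff] at h8
  exact ⟨_, h8, by rw [HexIn, hHm]; exact ⟨hHD, hH6⟩⟩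

lemma run_sound {D : Finset (Finset (Fin 16))} (hD : Good D) :
    ∀ (t : List (Fin 16 × Fin 16 × Fin 16 × Fin 16 × ℕ)) (known : List ℕ),
    (∀ k ∈ known, HexIn D k) → run known t = true → ∀ p ∈ t, HexIn D p.2.2.2.2 := by
  intro t
  induction t with
  | nil => intro _ _ _ p hp; simp at hp
  | cons x t ih =>
    obtain ⟨a, b, c, d, h⟩ := x
    intro known hk hr
    rw [run, Bool.and_eq_true] at hr
    obtain ⟨n, hn, hh⟩ := step_sound hD hk hr.1
    rw [List.mem_singleton] at hn
    subst hn
    have hk' : ∀ k ∈ n :: known, HexIn D k := by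
      intro k hk1
      rcases List.mem_cons.1 hk1 with rfl | h1
      · exact hh
      · exact hk k h1
    intro p hp
    rcases List.mem_cons.1 hp with rfl | h1
    · exact hh
    · exact ih _ hk' hr.2 p h1

lemma xor_ne : ∀ a b c : Fin 16, a ≠ b → a ≠ c → b ≠ c →
    D4 a b c (a ^^^ b ^^^ c) ∧ a ^^^ b ^^^ c ^^^ (a ^^^ b ^^^ c) = 0 := by decide +kernel

/-- octad through a quadruple -/
def omask (a b c d : Fin 16) : ℕ :=
  msk [a, b, c, d, a ^^^ b ^^^ c, a ^^^ b ^^^ d, a ^^^ c ^^^ d, b ^^^ c ^^^ d]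

lemma oct_sound {D : Finset (Finset (Fin 16))} (hD : Good D) {a b c d : Fin 16}
    (hq : okq a b c d = true) (h8 : pc (omask a b c d) = 8) : ofMask (omask a b c d) ∈ D := by
  rw [okq_iff] at hq
  obtain ⟨h4, hx⟩ := hq
  have hn : cnt D 6 {a, b, c, d} ≠ 0 := fun h => hx ((hD.2.2 a b c d h4).1 h)
  obtain ⟨O, hO, hO8, hQO, -⟩ := oct_exists hD.1 hD.2.1 (card4 h4) hn
  simp only [Finset.insert_subset_iff, Finset.singleton_subset_iff] at hQO
  obtain ⟨ma, mb, mc, md⟩ := hQO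
  have key : ∀ x y z, x ≠ y → x ≠ z → y ≠ z → x ∈ O → y ∈ O → z ∈ O → x ^^^ y ^^^ z ∈ O := by
    intro x y z h1 h2 h3 hx hy hz
    obtain ⟨q1, q2⟩ := xor_ne x y z h1 h2 h3
    exact closed4 hD.1 hD.2.1 hO hO8 q1 ((hD.2.2 _ _ _ _ q1).2 q2) hx hy hz
  obtain ⟨h1, h2, h3, h4, h5, h6⟩ := h4
  have hsub : ofMask (omask a b c d) ⊆ O := by
    intro i hi
    rw [omask, mem_msk] at hi
    simp only [List.mem_cons, List.not_mem_nil, or_false] at hi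
    rcases hi with rfl | rfl | rfl | rfl | rfl | rfl | rfl | rfl
    · exact ma
    · exact mb
    · exact mc
    · exact md
    · exact key _ _ _ h1 h2 h4 ma mb mc
    · exact key _ _ _ h1 h3 h5 ma mb md
    · exact key _ _ _ h2 h3 h6 ma mc md
    · exact key _ _ _ h4 h5 h6 mb mc md
  have : ofMask (omask a b c d) = O :=
    Finset.eq_of_subset_of_card_le hsub (by rw [card_ofMask, h8, hO8])
  rw [this]; exact hO

/-- propagation trace -/
def trace1 : List (Fin 16 × Fin 16 × Fin 16 × Fin 16 × ℕ) := [
   (0, 1, 2, 6, 18503), (0, 1, 2, 7, 8839), (0, 1, 3, 4, 10267), (0, 1, 3, 5, 16939), (0, 1, 3, 6, 4427),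
   (0, 1, 3, 7, 33931), (0, 1, 4, 6, 1619), (0, 1, 4, 7, 20627), (0, 1, 5, 6, 41059), (0, 1, 5, 7, 2467),
   (0, 1, 8, 10, 25859), (0, 1, 9, 11, 39427), (0, 2, 3, 4, 4637), (0, 2, 3, 5, 34861), (0, 2, 3, 6, 9293),
   (0, 2, 3, 7, 16781), (0, 2, 4, 5, 24629), (0, 2, 4, 7, 3221), (0, 2, 5, 6, 869), (0, 2, 6, 7, 37061),
   (0, 2, 8, 11, 14597), (0, 2, 9, 10, 50693), (0, 3, 4, 5, 1337), (0, 3, 4, 6, 49241), (0, 3, 5, 7, 12457),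
   (0, 3, 6, 7, 2761), (0, 3, 8, 9, 41737), (0, 3, 10, 11, 23561), (0, 4, 5, 6, 6257), (0, 4, 5, 7, 33457),
   (0, 4, 6, 7, 8657), (0, 4, 8, 9, 19217), (0, 4, 10, 12, 46097), (0, 5, 6, 7, 17633), (0, 5, 8, 12, 53537),
   (0, 5, 9, 10, 11809), (0, 6, 8, 10, 36161), (0, 6, 9, 12, 29249), (0, 7, 8, 9, 6017), (0, 7, 11, 13, 59521),
   (1, 2, 3, 4, 17438), (1, 2, 3, 5, 8494), (1, 2, 3, 6, 33358), (1, 2, 3, 7, 6286), (1, 2, 4, 5, 2614),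
   (1, 2, 4, 6, 12374), (1, 2, 5, 7, 49318), (1, 2, 6, 7, 1478), (1, 2, 8, 9, 21254), (1, 2, 10, 11, 44038),
   (1, 3, 4, 5, 36922), (1, 3, 4, 7, 922), (1, 3, 5, 6, 3178), (1, 3, 6, 7, 24778), (1, 3, 8, 11, 51466),
   (1, 3, 9, 10, 13834), (1, 4, 5, 6, 16754), (1, 4, 5, 7, 9394), (1, 4, 6, 7, 35026), (1, 4, 8, 10, 7442),
   (1, 4, 9, 13, 57874), (1, 5, 6, 7, 4834), (1, 5, 8, 9, 34594), (1, 5, 11, 12, 30754), (1, 6, 8, 9, 11074),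
   (1, 6, 10, 12, 54338), (1, 7, 8, 12, 45442), (1, 7, 9, 10, 20098), (2, 3, 4, 6, 2396), (2, 3, 4, 7, 41116),
   (2, 3, 5, 6, 20588), (2, 3, 5, 7, 1708), (2, 3, 8, 10, 38156), (2, 3, 9, 11, 27148), (2, 4, 5, 6, 33908),
   (2, 4, 5, 7, 4532), (2, 4, 6, 7, 17108), (2, 4, 8, 9, 10004), (2, 4, 11, 12, 55316), (2, 5, 6, 7, 10468),
   (2, 5, 8, 10, 19748), (2, 5, 9, 12, 45604), (2, 6, 8, 13, 57668), (2, 6, 9, 10, 7748), (2, 7, 8, 9, 35716),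
   (2, 7, 10, 12, 29828), (3, 4, 5, 6, 8824), (3, 4, 5, 7, 18616), (3, 4, 6, 7, 5336), (3, 4, 8, 12, 28952),
   (3, 4, 9, 10, 36376), (3, 5, 6, 7, 33256), (3, 5, 8, 9, 6952), (3, 5, 10, 13, 58408), (3, 6, 8, 9, 18248),
   (3, 6, 11, 12, 47176), (3, 7, 8, 10, 11656), (3, 7, 9, 12, 53896), (4, 5, 8, 11, 43312), (4, 5, 9, 10, 22064),
   (4, 6, 8, 9, 37712), (4, 6, 10, 11, 27728), (4, 7, 8, 10, 50576), (4, 7, 9, 11, 14992), (5, 6, 8, 10, 13664),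
   (5, 6, 9, 11, 51808), (5, 7, 8, 9, 25504), (5, 7, 10, 11, 40096), (6, 7, 8, 11, 22976), (6, 7, 9, 10, 42688)]

/-- octad generators -/
def octs : List (Fin 16 × Fin 16 × Fin 16 × Fin 16 × ℕ) := [
   (0, 1, 2, 4, 255), (0, 1, 2, 8, 3855), (0, 1, 2, 12, 61455), (0, 1, 4, 8, 13107), (0, 1, 4, 10, 52275),
   (0, 1, 6, 8, 50115), (0, 1, 6, 10, 15555), (0, 2, 4, 8, 21845), (0, 2, 4, 9, 43605), (0, 2, 5, 8, 42405),
   (0, 2, 5, 9, 23205), (0, 3, 4, 8, 39321), (0, 3, 4, 9, 26265), (0, 3, 5, 8, 26985), (0, 3, 5, 9, 38505)]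

/-- half of the canonical code -/
def halfL : List ℕ := 0 :: 33047 :: 5159 :: (trace1.map (fun p => p.2.2.2.2) ++
  octs.map (fun p => p.2.2.2.2))

/-- masks of the canonical code -/
def canL : List ℕ := halfL ++ halfL.map (fun n => 65535 ^^^ n)

/-- the canonical code -/
def Canon : Finset (Finset (Fin 16)) := (canL.map ofMask).toFinset

lemma run_ok : run [5159, 33047] trace1 = true := by decide +kernel

lemma octs_ok : (octs.all fun p => okq p.1 p.2.1 p.2.2.1 p.2.2.2.1 &&
    (omask p.1 p.2.1 p.2.2.1 p.2.2.2.1 == p.2.2.2.2) && pc p.2.2.2.2 == 8) = true := by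
  decide +kernel

lemma canL_nodup : canL.Nodup := by decide +kernel

lemma canL_len : canL.length = 256 := by decide +kernel

lemma canL_lt : ∀ n ∈ canL, n < 65536 := by decide +kernel

lemma Canon_card : Canon.card = 256 := by
  unfold Canon
  rw [List.toFinset_card_of_nodup, List.length_map, canL_len]
  exact canL_nodup.map_on (fun x hx y hy h => ofMask_inj (canL_lt x hx) (canL_lt y hy) h)

lemma H0_eq : ofMask 33047 = {0, 1, 2, 4, 8, 15} := by decide +kernel

theorem canonical {D : Finset (Finset (Fin 16))} (hD : Good D) (h0 : HexIn D 33047)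
    (h1 : HexIn D 5159) : D = Canon := by
  have hr := run_sound hD trace1 [5159, 33047] (by simp [h0, h1]) run_ok
  have ho : ∀ p ∈ octs, ofMask p.2.2.2.2 ∈ D := by
    intro p hp
    have := List.all_eq_true.1 octs_ok p hp
    simp only [Bool.and_eq_true, beq_iff_eq] at this
    obtain ⟨⟨q1, q2⟩, q3⟩ := this
    rw [← q2] at q3 ⊢
    exact oct_sound hD q1 q3
  have hh : ∀ n ∈ halfL, ofMask n ∈ D := by
    intro n hn
    simp only [halfL, List.mem_cons, List.mem_append, List.mem_map] at hn
    rcases hn with rfl | rfl | rfl | ⟨p, hp, rfl⟩ | ⟨p, hp, rfl⟩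
    · have : ofMask 0 = ∅ := by decide
      rw [this]; exact hD.2.1
    · exact h0.1
    · exact h1.1
    · exact (hr p hp).1
    · exact ho p hp
  have hsub : Canon ⊆ D := by
    intro A hA
    simp only [Canon, canL, List.mem_toFinset, List.mem_map, List.mem_append] at hA
    obtain ⟨n, hn | ⟨m, hm, rfl⟩, rfl⟩ := hA
    · exact hh n hn
    · rw [ofMask_compl]; exact compl_mem hD.1 (hh m hm)
  exact (Finset.eq_of_subset_of_card_le hsub (by rw [Canon_card, hD.1.1])).symm

/-- the linear map exchanging the two branches -/
def tauFun (x : Fin 16) : Fin 16 := if x < 8 then x else x ^^^ 7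

/-- the same as a permutation -/
def tau : Equiv.Perm (Fin 16) where
  toFun := tauFun
  invFun := tauFun
  left_inv := by decide
  right_inv := by decide

lemma tau_xor : ∀ a b : Fin 16, tau (a ^^^ b) = tau a ^^^ tau b := by decide

lemma good_tau {D : Finset (Finset (Fin 16))} (hD : Good D) : Good (rel tau D) := by
  refine ⟨rel_isC hD.1, rel_empty hD.2.1, ?_⟩
  intro a b c d h4
  obtain ⟨a, rfl⟩ := tau.surjective a
  obtain ⟨b, rfl⟩ := tau.surjective b
  obtain ⟨c, rfl⟩ := tau.surjective c
  obtain ⟨d, rfl⟩ := tau.surjective d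
  have h4' : D4 a b c d := by simpa [D4] using h4
  rw [← mp4, rel_cnt, hD.2.2 a b c d h4', ← tau_xor, ← tau_xor, ← tau_xor]
  have : (0 : Fin 16) = tau 0 := by decide
  conv_rhs => rw [this]
  exact (tau.injective.eq_iff).symm

theorem to_canon {C : Finset (Finset (Fin 16))} (hC : IsC C) (h0 : ∅ ∈ C) {p0 p1 p2 : Fin 16}
    (h01 : p0 ≠ p1) (h02 : p0 ≠ p2) (h12 : p1 ≠ p2) :
    ∃ e : Equiv.Perm (Fin 16), e p0 = 0 ∧ e p1 = 1 ∧ e p2 = 2 ∧ Good (rel e C) ∧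
      rel e C = Canon := by
  obtain ⟨e, e0, e1, e2, hG, hH⟩ := labelling hC h0 h01 h02 h12
  rw [← H0_eq] at hH
  have c0 : (ofMask 33047).card = 6 := by decide +kernel
  have hst : step [33047] 0 1 2 5 [5159, 10279] = true := by decide +kernel
  obtain ⟨n, hn, hh⟩ := step_sound hG (known := [33047]) (by simp [HexIn, hH, c0]) hst
  simp only [List.mem_cons, List.not_mem_nil, or_false] at hn
  rcases hn with rfl | rfl
  · exact ⟨e, e0, e1, e2, hG, canonical hG ⟨hH, c0⟩ hh⟩
  · have g := good_tau hG
    have t0 : mp tau (ofMask 33047) = ofMask 33047 := by decide +kernel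
    have t1 : mp tau (ofMask 10279) = ofMask 5159 := by decide +kernel
    have m0 : HexIn (rel tau (rel e C)) 33047 := ⟨by rw [← t0, mem_rel]; exact hH, c0⟩
    have m1 : HexIn (rel tau (rel e C)) 5159 :=
      ⟨by rw [← t1, mem_rel]; exact hh.1, by decide +kernel⟩
    have hc := canonical g m0 m1
    rw [rel_rel] at g hc
    refine ⟨e.trans tau, ?_, ?_, ?_, g, hc⟩
    · rw [Equiv.trans_apply, e0]; decide
    · rw [Equiv.trans_apply, e1]; decide
    · rw [Equiv.trans_apply, e2]; decide

end NR

namespace NR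

abbrev V := Fin 16 → ZMod 2

/-- support -/
def supp (x : V) : Finset (Fin 16) := Finset.univ.filter (fun i => x i ≠ 0)

/-- indicator -/
def ind (A : Finset (Fin 16)) : V := fun i => if i ∈ A then 1 else 0

lemma mem_supp {x : V} {i : Fin 16} : i ∈ supp x ↔ x i ≠ 0 := by simp [supp]

lemma supp_ind (A : Finset (Fin 16)) : supp (ind A) = A := by
  ext i; rw [mem_supp]; unfold ind; split_ifs with h <;> simp [h]

lemma z2 : ∀ a : ZMod 2, a ≠ 0 → a = 1 := by decide

lemma ind_supp (x : V) : ind (supp x) = x := by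
  funext i
  unfold ind
  by_cases h : x i = 0
  · rw [if_neg (by rw [mem_supp]; simpa using h), h]
  · rw [if_pos (by rw [mem_supp]; exact h), z2 _ h]

lemma supp_inj {x y : V} (h : supp x = supp y) : x = y := by
  rw [← ind_supp x, h, ind_supp]

lemma z2add : ∀ a b : ZMod 2, a + b ≠ 0 ↔ (a ≠ 0 ∧ ¬ (b ≠ 0) ∨ b ≠ 0 ∧ ¬ (a ≠ 0)) := by decide

lemma supp_add (x y : V) : supp (x + y) = symmDiff (supp x) (supp y) := by
  ext i
  rw [Finset.mem_symmDiff, mem_supp, mem_supp, mem_supp]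
  exact z2add _ _

lemma z2sub : ∀ a b : ZMod 2, a ≠ b ↔ a + b ≠ 0 := by decide

lemma hd_eq (x y : V) : hammingDist x y = (symmDiff (supp x) (supp y)).card := by
  rw [← supp_add]
  unfold hammingDist supp
  congr 1
  ext i
  simp only [Finset.mem_filter, Finset.mem_univ, true_and]
  exact z2sub _ _

lemma add_self2 (c : V) : c + c = 0 := by
  funext i
  exact (by decide : ∀ a : ZMod 2, a + a = 0) (c i)

lemma add_cancel2 (x c : V) : x + c + c = x := by rw [add_assoc, add_self2, add_zero]

/-- initial segment -/
def low (d : ℕ) : Finset (Fin 16) := Finset.univ.filter (fun i => i.val < d)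

lemma ex3 : ∀ a b : Fin 16, ∃ c, a ≠ c ∧ b ≠ c := by decide

lemma x3 : ∀ d : Fin 16, 0 ^^^ 1 ^^^ 2 ^^^ d = 0 → d = 3 := by decide

theorem normalize {F : Finset (Finset (Fin 16))} (hF : IsC F) (h0 : ∅ ∈ F) (X : Finset (Fin 16))
    (hX : ∀ A ∈ F, X.card ≤ (symmDiff X A).card) :
    ∃ e : Equiv.Perm (Fin 16), rel e F = Canon ∧ mp e X = low X.card := by
  obtain ⟨A, hA, hA4⟩ := covering hF h0 X
  have h4 := (hX A hA).trans hA4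
  have hc : X.card = 0 ∨ X.card = 1 ∨ X.card = 2 ∨ X.card = 3 ∨ X.card = 4 := by omega
  rcases hc with h | h | h | h | h
  · obtain ⟨e, e0, e1, e2, -, he⟩ := to_canon hF h0 (p0 := 0) (p1 := 1) (p2 := 2)
      (by decide) (by decide) (by decide)
    refine ⟨e, he, ?_⟩
    rw [h, Finset.card_eq_zero.1 h]
    have : mp e ∅ = ∅ := Finset.map_empty _
    rw [this]; decide
  · obtain ⟨p0, hp⟩ := Finset.card_eq_one.1 h
    obtain ⟨p1, h01, -⟩ := ex3 p0 p0
    obtain ⟨p2, h02, h12⟩ := ex3 p0 p1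
    obtain ⟨e, e0, e1, e2, -, he⟩ := to_canon hF h0 h01 h02 h12
    refine ⟨e, he, ?_⟩
    rw [h, hp]
    have : mp e {p0} = {e p0} := by simp [mp]
    rw [this, e0]; decide
  · obtain ⟨p0, p1, h01, hp⟩ := Finset.card_eq_two.1 h
    obtain ⟨p2, h02, h12⟩ := ex3 p0 p1
    obtain ⟨e, e0, e1, e2, -, he⟩ := to_canon hF h0 h01 h02 h12
    refine ⟨e, he, ?_⟩
    rw [h, hp]
    have : mp e {p0, p1} = {e p0, e p1} := by simp [mp]
    rw [this, e0, e1]; decide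
  · obtain ⟨p0, p1, p2, h01, h02, h12, hp⟩ := Finset.card_eq_three.1 h
    obtain ⟨e, e0, e1, e2, -, he⟩ := to_canon hF h0 h01 h02 h12
    refine ⟨e, he, ?_⟩
    rw [h, hp]
    have : mp e {p0, p1, p2} = {e p0, e p1, e p2} := by simp [mp]
    rw [this, e0, e1, e2]; decide
  · obtain ⟨p3, T, hpT, hins, hT⟩ := Finset.card_eq_succ.1 h
    obtain ⟨p0, p1, p2, h01, h02, h12, rfl⟩ := Finset.card_eq_three.1 hT
    rw [rot4] at hins
    simp only [Finset.mem_insert, Finset.mem_singleton, not_or] at hpT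
    obtain ⟨h30, h31, h32⟩ := hpT
    obtain ⟨e, e0, e1, e2, hG, he⟩ := to_canon hF h0 h01 h02 h12
    refine ⟨e, he, ?_⟩
    have hcnt : cnt F 6 X = 0 := by
      by_contra hn
      obtain ⟨H, hH, hH6, hXH⟩ := hex_exists hn
      have q1 := csd X H
      have q2 := hX H hH
      rw [Finset.inter_eq_left.2 hXH] at q1
      omega
    have h4' : D4 p0 p1 p2 p3 := ⟨h01, h02, Ne.symm h30, h12, Ne.symm h31, Ne.symm h32⟩
    have e3 : e p3 = 3 := by
      apply x3
      rw [← hins, ← rel_cnt e, mp4] at hcnt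
      have := (hG.2.2 (e p0) (e p1) (e p2) (e p3) (by simpa [D4] using h4')).1 hcnt
      rwa [e0, e1, e2] at this
    rw [h, ← hins, mp4, e0, e1, e2, e3]
    decide

lemma exists_nearest {C : Set V} (hne : C.Nonempty) (x : V) :
    ∃ c ∈ C, hammingDist x c = distToCode C x ∧ ∀ c' ∈ C, distToCode C x ≤ hammingDist x c' := by
  have hn : {d | ∃ c ∈ C, hammingDist x c = d}.Nonempty := by
    obtain ⟨c, hc⟩ := hne
    exact ⟨_, c, hc, rfl⟩
  obtain ⟨c, hc, h⟩ := Nat.sInf_mem hn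
  exact ⟨c, hc, h, fun c' hc' => Nat.sInf_le ⟨c', hc', rfl⟩⟩

/-- canonical code as a set of vectors -/
def CanV : Set V := {x | supp x ∈ Canon}

theorem main_norm {C : Set V} (hcard : C.ncard = 256) (hd : IsMinDist C 6) (x : V) :
    ∃ g : Equiv.Perm V, IsHammingAut g ∧ ⇑g '' C = CanV ∧ g x = ind (low (distToCode C x)) := by
  classical
  have hne : C.Nonempty := by
    obtain ⟨-, y, hy, -⟩ := hd
    exact ⟨y, hy⟩
  obtain ⟨c, hc, hxc, hmin⟩ := exists_nearest hne x
  let F : Finset (Finset (Fin 16)) := Finset.univ.filter (fun A => ind A + c ∈ C)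
  have memF : ∀ A, A ∈ F ↔ ind A + c ∈ C := fun A => by simp [F]
  have memF' : ∀ y, supp (y + c) ∈ F ↔ y ∈ C := fun y => by
    rw [memF, ind_supp, add_cancel2]
  have injF : Function.Injective (fun A => ind A + c) := by
    intro A B h
    have h' : ind A = ind B := add_right_cancel h
    rw [← supp_ind A, h', supp_ind]
  have hsd : ∀ A B, hammingDist (ind A + c) (ind B + c) = (symmDiff A B).card := by
    intro A B
    rw [hd_eq, supp_add, supp_add, supp_ind, supp_ind]
    congr 1
    ext i; simp only [Finset.mem_symmDiff]; tauto
  have hF : IsC F := by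
    constructor
    · have : C = (fun A => ind A + c) '' (F : Set (Finset (Fin 16))) := by
        ext y
        constructor
        · intro hy
          exact ⟨supp (y + c), (memF' y).2 hy, by simp only [ind_supp, add_cancel2]⟩
        · rintro ⟨A, hA, rfl⟩
          exact (memF A).1 hA
      rw [this, Set.ncard_image_of_injective _ injF, Set.ncard_coe_finset] at hcard
      exact hcard
    · intro A hA B hB hAB
      rw [← hsd]
      exact hd.1 _ ((memF A).1 hA) _ ((memF B).1 hB) (fun h => hAB (injF h))
  have hF0 : ∅ ∈ F := by
    rw [memF]
    have : ind ∅ = 0 := by funext i; simp [ind]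
    rw [this, zero_add]; exact hc
  have hXc : (supp (x + c)).card = distToCode C x := by rw [supp_add, ← hd_eq, hxc]
  obtain ⟨e, he, heX⟩ := normalize hF hF0 (supp (x + c)) (by
    intro A hA
    rw [hXc, ← hsd, ind_supp, add_cancel2]
    exact hmin _ ((memF A).1 hA))
  let g : Equiv.Perm V := (Equiv.addRight c).trans (Equiv.arrowCongr e (Equiv.refl (ZMod 2)))
  have gdef : ∀ y, g y = fun i => (y + c) (e.symm i) := fun y => rfl
  have gs : ∀ y, supp (g y) = mp e (supp (y + c)) := by
    intro y; ext i; rw [mem_mp, mem_supp, mem_supp, gdef]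
  refine ⟨g, ⟨e, fun i => c (e.symm i), fun y => rfl⟩, ?_, ?_⟩
  · have key : ∀ y, g y ∈ CanV ↔ y ∈ C := by
      intro y
      change supp (g y) ∈ Canon ↔ _
      rw [gs, ← he, mem_rel, memF']
    ext z
    constructor
    · rintro ⟨y, hy, rfl⟩; exact (key y).2 hy
    · intro hz
      refine ⟨g.symm z, ?_, g.apply_symm_apply z⟩
      rw [← key, g.apply_symm_apply]; exact hz
  · apply supp_inj
    rw [gs, heX, supp_ind, hXc]

lemma aut_dist {f : Equiv.Perm V} (hf : IsHammingAut f) (x y : V) :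
    hammingDist (f x) (f y) = hammingDist x y := by
  obtain ⟨σ, v, h⟩ := hf
  unfold hammingDist
  refine Finset.card_equiv σ.symm ?_
  intro i
  simp [h]

lemma aut_one : IsHammingAut (1 : Equiv.Perm V) := ⟨Equiv.refl _, 0, fun x => by funext i; simp⟩

lemma aut_mul {f g : Equiv.Perm V} (hf : IsHammingAut f) (hg : IsHammingAut g) :
    IsHammingAut (f * g) := by
  obtain ⟨σ, v, h⟩ := hf
  obtain ⟨τ, w, k⟩ := hg
  refine ⟨τ.trans σ, (fun i => w (σ.symm i)) + v, fun x => ?_⟩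
  rw [Equiv.Perm.mul_apply, h, k]
  funext i
  simp [add_assoc]

lemma aut_inv {f : Equiv.Perm V} (hf : IsHammingAut f) : IsHammingAut f⁻¹ := by
  obtain ⟨σ, v, h⟩ := hf
  refine ⟨σ.symm, fun i => - v (σ i), fun x => ?_⟩
  apply f.injective
  rw [h (_ + _)]
  change f (f.symm x) = _
  rw [f.apply_symm_apply]
  funext i
  change x i = x (σ (σ.symm i)) + - v (σ (σ.symm i)) + v i
  rw [σ.apply_symm_apply, neg_add_cancel_right]

lemma img_inv {f : Equiv.Perm V} {A B : Set V} (h : ⇑f '' A = B) : ⇑f⁻¹ '' B = A := by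
  rw [← h, Set.image_image]; simp

/-- stabiliser -/
def stab (C : Set V) : Subgroup (Equiv.Perm V) where
  carrier := {g | IsHammingAut g ∧ ⇑g '' C = C}
  mul_mem' := by
    rintro f g ⟨hf, hf'⟩ ⟨hg, hg'⟩
    refine ⟨aut_mul hf hg, ?_⟩
    rw [Equiv.Perm.coe_mul, Set.image_comp, hg', hf']
  one_mem' := ⟨aut_one, by simp⟩
  inv_mem' := by
    rintro f ⟨hf, hf'⟩
    exact ⟨aut_inv hf, img_inv hf'⟩

lemma dist_inv {C : Set V} {g : Equiv.Perm V} (hg : IsHammingAut g) (hC : ⇑g '' C = C) (x : V) :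
    distToCode C (g x) = distToCode C x := by
  unfold distToCode
  congr 1
  ext d
  simp only [Set.mem_ofPred_eq]
  constructor
  · rintro ⟨c, hc, h⟩
    rw [← hC] at hc
    obtain ⟨b, hb, rfl⟩ := hc
    exact ⟨b, hb, by rw [← h, aut_dist hg]⟩
  · rintro ⟨c, hc, h⟩
    exact ⟨g c, hC ▸ Set.mem_image_of_mem _ hc, by rw [aut_dist hg, h]⟩

end NR

/-- Every binary `(16, 256, 6)` code is completely transitive; in particular the
Nordstrom-Robinson code is completely transitive. -/
theorem stmt_9 (C : Set (Fin 16 → ZMod 2)) (hcard : C.ncard = 256)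
    (hd : IsMinDist C 6) :
    IsCompletelyTransitive C := by
  refine ⟨NR.stab C, fun g hg => hg, ?_⟩
  intro i x hx
  ext y
  simp only [Set.mem_ofPred_eq]
  constructor
  · intro hy
    obtain ⟨g, hg, hgC, hgx⟩ := NR.main_norm hcard hd x
    obtain ⟨k, hk, hkC, hky⟩ := NR.main_norm hcard hd y
    refine ⟨k⁻¹ * g, ⟨NR.aut_mul (NR.aut_inv hk) hg, ?_⟩, ?_⟩
    · rw [Equiv.Perm.coe_mul, Set.image_comp, hgC]
      exact NR.img_inv hkC
    · rw [Equiv.Perm.mul_apply, hgx, hx, ← hy, ← hky]; simp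
  · rintro ⟨g, ⟨hg, hgC⟩, rfl⟩
    rw [NR.dist_inv hg hgC, hx]
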